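/- Fix k ∈ {1,…,p−1}. Suppose that almost surely U^{-(k−1)} (U^{-(k−1)})ᵀ B V^{-(k−1)} (V^{-(k−1)})ᵀ = 0_{N×p} (the null hypothesis H_{0,k}). Then the conditional singular value statistic S_{k,0} = (∫_{d_k}^{d_{k−1}} e^{−z²/(2σ²)} z^{N−p} ∏_{j≤p, j≠k} |z² − d_j²| dz) / (∫_{d_{k+1}}^{d_{k−1}} e^{−z²/(2σ²)} z^{N−p} ∏_{j≤p, j≠k} |z² − d_j²| dz) is uniformly distributed on (0,1). -/

import Mathlib

open MeasureTheory ProbabilityTheory Matrix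

lemma csv_complexMGF_eq {Ω Ω' : Type*} [MeasurableSpace Ω] [MeasurableSpace Ω'] (μ : Measure Ω)
    (μ' : Measure Ω') (X : Ω → ℝ) (X' : Ω' → ℝ) (ε : ℝ) (hε : 0 < ε)
    (h : ∀ t : ℝ, |t| < ε → Integrable (fun ω => Real.exp (t * X ω)) μ)
    (h' : ∀ t : ℝ, |t| < ε → Integrable (fun ω => Real.exp (t * X' ω)) μ')
    (hm : ∀ n : ℕ, ∫ ω, X ω ^ n ∂μ = ∫ ω, X' ω ^ n ∂μ') (z : ℂ) (hz : |z.re| < ε) :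
    complexMGF X μ z = complexMGF X' μ' z := by
  have sub : ∀ {Ω : Type _} [MeasurableSpace Ω] (μ : Measure Ω) (X : Ω → ℝ)
      (h : ∀ t : ℝ, |t| < ε → Integrable (fun ω => Real.exp (t * X ω)) μ) (t : ℝ), |t| < ε →
      t ∈ interior (integrableExpSet X μ) := by
    intro Ω _ μ X h t ht
    rw [mem_interior]
    refine ⟨Set.Ioo (-ε) ε, fun s hs => h s (abs_lt.2 hs), isOpen_Ioo, abs_lt.1 ht⟩
  let S : Set ℂ := {z | |z.re| < ε}
  have hSeq : S = Complex.reLm ⁻¹' (Set.Ioo (-ε) ε) := by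
    ext z; simp [S, abs_lt]
  have hS : IsPreconnected S := by
    rw [hSeq]
    exact ((convex_Ioo (-ε) ε).linear_preimage Complex.reLm).isPreconnected
  have a1 : AnalyticOnNhd ℂ (complexMGF X μ) S := fun z hz =>
    analyticAt_complexMGF (sub μ X h _ hz)
  have a2 : AnalyticOnNhd ℂ (complexMGF X' μ') S := fun z hz =>
    analyticAt_complexMGF (by
      rw [mem_interior]
      refine ⟨Set.Ioo (-ε) ε, fun s hs => h' s (abs_lt.2 hs), isOpen_Ioo, abs_lt.1 hz⟩)
  have h0 : (0:ℂ) ∈ S := by simp [S, hε]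
  have h01 : (0:ℂ).re ∈ interior (integrableExpSet X μ) := sub μ X h _ (by simpa using hε)
  have h02 : (0:ℂ).re ∈ interior (integrableExpSet X' μ') := by
      rw [mem_interior]
      refine ⟨Set.Ioo (-ε) ε, fun s hs => h' s (abs_lt.2 hs), isOpen_Ioo, by simpa using hε⟩
  have key : complexMGF X μ =ᶠ[nhds 0] complexMGF X' μ' := by
    have p1 := (a1 0 h0).hasFPowerSeriesAt
    have p2 := (a2 0 h0).hasFPowerSeriesAt
    have hp : (fun n => iteratedDeriv n (complexMGF X μ) 0 / (n.factorial : ℂ)) =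
      (fun n => iteratedDeriv n (complexMGF X' μ') 0 / (n.factorial : ℂ)) := by
      funext n
      rw [iteratedDeriv_complexMGF h01, iteratedDeriv_complexMGF h02]
      have := hm n
      simp only [zero_mul, Complex.exp_zero, mul_one]
      have e : ((∫ ω, X ω ^ n ∂μ : ℝ) : ℂ) = ((∫ ω, X' ω ^ n ∂μ' : ℝ) : ℂ) := by rw [this]
      rw [← integral_complex_ofReal, ← integral_complex_ofReal] at e
      push_cast at e
      rw [e]
    rw [hp] at p1
    have := HasFPowerSeriesAt.eventually_eq_zero (by simpa using p1.sub p2)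
    filter_upwards [this] with z hz
    simpa [sub_eq_zero] using hz
  exact a1.eqOn_of_preconnected_of_eventuallyEq a2 hS h0 key hz


lemma csv_integrable_pow (v : NNReal) (n : ℕ) :
    Integrable (fun x : ℝ => x ^ n) (gaussianReal 0 v) := by
  have h := integrable_pow_of_mem_interior_integrableExpSet (X := id) (μ := gaussianReal 0 v)
    (by rw [integrableExpSet_id_gaussianReal]; simp) n
  simpa using h

lemma csv_integrable_poly1 (v : NNReal) (q : Polynomial ℝ) :
    Integrable (fun x : ℝ => q.eval x) (gaussianReal 0 v) := by
  simp_rw [Polynomial.eval_eq_sum_range]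
  exact integrable_finsetSum _ fun i _ => (csv_integrable_pow v i).const_mul _

lemma csv_integrable_vol (v : NNReal) (hv : v ≠ 0) (f : ℝ → ℝ)
    (h : Integrable f (gaussianReal 0 v)) :
    Integrable (fun x => f x * gaussianPDFReal 0 v x) := by
  rw [gaussianReal_of_var_ne_zero _ hv, integrable_withDensity_iff (measurable_gaussianPDF _ _)
    (by simp [gaussianPDF])] at h
  simpa using h

lemma csv_hasDeriv (v : NNReal) (hv : v ≠ 0) (q : Polynomial ℝ) (x : ℝ) :
    HasDerivAt (fun x => q.eval x * gaussianPDFReal 0 v x)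
      ((q.derivative.eval x - (v:ℝ)⁻¹ * (x * q.eval x)) * gaussianPDFReal 0 v x) x := by
  have hv' : (v:ℝ) ≠ 0 := by exact_mod_cast hv
  have h1 := q.hasDerivAt x
  have h2 : HasDerivAt (fun x => gaussianPDFReal 0 v x)
      (gaussianPDFReal 0 v x * (-(2 * x) / (2 * v))) x := by
    simp only [gaussianPDFReal_def]
    have h3 : HasDerivAt (fun x : ℝ => -(x - 0) ^ 2 / (2 * (v:ℝ))) (-(2 * x) / (2 * v)) x := by
      have := (((hasDerivAt_id x).sub_const 0).pow 2).neg.div_const (2 * (v:ℝ))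
      convert! this using 1
      simp
    have := (h3.exp).const_mul (√(2 * Real.pi * v))⁻¹
    convert! this using 1
    ring
  convert! h1.mul h2 using 1
  field_simp
  ring

lemma csv_integrable_deriv (v : NNReal) (hv : v ≠ 0) (q : Polynomial ℝ) :
    Integrable (fun x => (q.derivative.eval x - (v:ℝ)⁻¹ * (x * q.eval x))
      * gaussianPDFReal 0 v x) := by
  have := csv_integrable_vol v hv _ (csv_integrable_poly1 v
    (q.derivative - Polynomial.C (v:ℝ)⁻¹ * (Polynomial.X * q)))
  simpa using this

lemma csv_ibp1_whole (v : NNReal) (hv : v ≠ 0) (q : Polynomial ℝ) :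
    ∫ x, x * q.eval x ∂(gaussianReal 0 v) = v * ∫ x, q.derivative.eval x ∂(gaussianReal 0 v) := by
  have hv' : (v:ℝ) ≠ 0 := by exact_mod_cast hv
  have h := integral_eq_zero_of_hasDerivAt_of_integrable (csv_hasDeriv v hv q)
    (csv_integrable_deriv v hv q) (csv_integrable_vol v hv _ (csv_integrable_poly1 v q))
  have h2 : ∫ x, (q.derivative.eval x - (v:ℝ)⁻¹ * (x * q.eval x)) ∂(gaussianReal 0 v) = 0 := by
    rw [integral_gaussianReal_eq_integral_smul hv]
    refine Eq.trans (integral_congr_ae (ae_of_all _ fun x => ?_)) h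
    simp [mul_comm]
  rw [integral_sub (csv_integrable_poly1 v _), integral_const_mul] at h2
  · rw [sub_eq_zero] at h2
    rw [h2]; field_simp
  · have := (csv_integrable_poly1 v (Polynomial.X * q)).const_mul (v:ℝ)⁻¹
    simpa using this

lemma csv_ibp1_set {ι : Type*} [Finite ι] (v : NNReal) (hv : v ≠ 0) (q : Polynomial ℝ)
    (a : ℝ) (c : ι → Prop) (b : ι → ℝ)
    (ha : q.eval a = 0) (hb : ∀ j, c j → q.eval (b j) = 0) :
    ∫ x in {z : ℝ | a < z ∧ ∀ j, c j → z < b j},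
      (v * q.derivative.eval x - x * q.eval x) ∂(gaussianReal 0 v) = 0 := by
  classical
  have := Fintype.ofFinite ι
  have hv' : (v:ℝ) ≠ 0 := by exact_mod_cast hv
  have key : ∫ x in {z : ℝ | a < z ∧ ∀ j, c j → z < b j},
      ((q.derivative.eval x - (v:ℝ)⁻¹ * (x * q.eval x)) * gaussianPDFReal 0 v x) = 0 := by
    have hintg := csv_integrable_deriv v hv q
    have hd := csv_hasDeriv v hv q
    rcases (Finset.univ.filter c).eq_empty_or_nonempty with he | hne
    · have : {z : ℝ | a < z ∧ ∀ j, c j → z < b j} = Set.Ioi a := by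
        ext z
        simp only [Finset.filter_eq_empty_iff, Finset.mem_univ, forall_true_left] at he
        simp [he]
      rw [this, integral_Ioi_of_hasDerivAt_of_tendsto' (fun x _ => hd x) hintg.integrableOn
        (tendsto_zero_of_hasDerivAt_of_integrableOn_Ioi (a := a) (fun x _ => hd x)
          hintg.integrableOn (csv_integrable_vol v hv _ (csv_integrable_poly1 v q)).integrableOn)]
      simp [ha]
    · obtain ⟨j, hj, hmin⟩ := Finset.exists_min_image _ b hne
      simp only [Finset.mem_filter, Finset.mem_univ, true_and] at hj hmin
      have : {z : ℝ | a < z ∧ ∀ j, c j → z < b j} = Set.Ioo a (b j) := by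
        ext z
        simp only [Set.mem_ofPred_eq, Set.mem_Ioo]
        exact ⟨fun h => ⟨h.1, h.2 j hj⟩, fun h => ⟨h.1, fun i hi => h.2.trans_le (hmin i hi)⟩⟩
      rw [this]
      rcases le_or_gt (b j) a with hba | hab
      · simp [Set.Ioo_eq_empty (not_lt.2 hba)]
      · rw [← integral_Ioc_eq_integral_Ioo, ← intervalIntegral.integral_of_le hab.le,
          intervalIntegral.integral_eq_sub_of_hasDerivAt (fun x _ => hd x) hintg.intervalIntegrable]
        simp [ha, hb j hj]
  have hms : MeasurableSet {z : ℝ | a < z ∧ ∀ j, c j → z < b j} := by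
    have : {z : ℝ | a < z ∧ ∀ j, c j → z < b j} = Set.Ioi a ∩ ⋂ j, ⋂ (_ : c j), Set.Iio (b j) := by
      ext z; simp
    rw [this]
    exact measurableSet_Ioi.inter (MeasurableSet.iInter fun j => MeasurableSet.iInter fun _ =>
      measurableSet_Iio)
  rw [← integral_indicator hms, integral_gaussianReal_eq_integral_smul hv]
  rw [← integral_indicator hms] at key
  refine Eq.trans (b := ∫ x, (v:ℝ) * _) (integral_congr_ae (ae_of_all _ fun x => ?_))
    ((integral_const_mul _ _).trans (by rw [key, mul_zero]))
  dsimp only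
  by_cases hx : x ∈ {z : ℝ | a < z ∧ ∀ j, c j → z < b j}
  · simp only [Set.indicator_of_mem hx, smul_eq_mul]
    field_simp
  · simp [Set.indicator_of_notMem hx]

section pi
variable {ι : Type*} [Fintype ι]

lemma csv_integrable_mv (v : NNReal) (F : MvPolynomial ι ℝ) :
    Integrable (fun x : ι → ℝ => MvPolynomial.eval x F)
      (Measure.pi fun _ : ι => gaussianReal 0 v) := by
  induction F using MvPolynomial.induction_on' with
  | monomial s c =>
    simp only [MvPolynomial.eval_monomial]
    apply Integrable.const_mul
    have : (fun x : ι → ℝ => s.prod fun n e => x n ^ e) = fun x => ∏ i, x i ^ (s i) := by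
      funext x
      exact Finsupp.prod_fintype _ _ (by simp)
    rw [this]
    exact Integrable.fintype_prod (f := fun i (y : ℝ) => y ^ (s i))
      (fun i => csv_integrable_pow v _)
  | add p q hp hq =>
    simp only [map_add]
    exact hp.add hq

lemma csv_int_monomial (v : NNReal) (s : ι →₀ ℕ) (c : ℝ) :
    ∫ x : ι → ℝ, MvPolynomial.eval x (MvPolynomial.monomial s c)
      ∂(Measure.pi fun _ : ι => gaussianReal 0 v)
      = c * ∏ i, ∫ y, y ^ (s i) ∂(gaussianReal 0 v) := by
  simp only [MvPolynomial.eval_monomial]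
  rw [integral_const_mul, ← integral_fintype_prod_eq_prod (fun i (y : ℝ) => y ^ (s i))]
  congr 2
  funext x
  exact Finsupp.prod_fintype _ _ (by simp)

lemma csv_stein (v : NNReal) (hv : v ≠ 0) (i : ι) (F : MvPolynomial ι ℝ) :
    ∫ x : ι → ℝ, MvPolynomial.eval x (MvPolynomial.X i * F)
      ∂(Measure.pi fun _ : ι => gaussianReal 0 v) =
    v * ∫ x : ι → ℝ, MvPolynomial.eval x (MvPolynomial.pderiv i F)
      ∂(Measure.pi fun _ : ι => gaussianReal 0 v) := by
  classical
  induction F using MvPolynomial.induction_on' with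
  | monomial s c =>
    have e : (MvPolynomial.X i * MvPolynomial.monomial s c : MvPolynomial ι ℝ) =
      MvPolynomial.monomial (Finsupp.single i 1 + s) c := by
      rw [MvPolynomial.X, MvPolynomial.monomial_mul, one_mul]
    rw [e, MvPolynomial.pderiv_monomial, csv_int_monomial, csv_int_monomial,
      ← Finset.mul_prod_erase _ _ (Finset.mem_univ i), ← Finset.mul_prod_erase _ _ (Finset.mem_univ i)]
    have h1 : ∏ j ∈ Finset.univ.erase i, ∫ y, y ^ ((Finsupp.single i 1 + s : ι →₀ ℕ) j) ∂(gaussianReal 0 v)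
      = ∏ j ∈ Finset.univ.erase i, ∫ y, y ^ (s j) ∂(gaussianReal 0 v) := by
      refine Finset.prod_congr rfl fun j hj => ?_
      have : i ≠ j := (Finset.ne_of_mem_erase hj).symm
      simp [Finsupp.single_apply, this]
    have h2 : ∏ j ∈ Finset.univ.erase i, ∫ y, y ^ ((s - Finsupp.single i 1 : ι →₀ ℕ) j) ∂(gaussianReal 0 v)
      = ∏ j ∈ Finset.univ.erase i, ∫ y, y ^ (s j) ∂(gaussianReal 0 v) := by
      refine Finset.prod_congr rfl fun j hj => ?_
      have : i ≠ j := (Finset.ne_of_mem_erase hj).symm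
      simp [Finsupp.single_apply, this]
    rw [h1, h2]
    have h3 := csv_ibp1_whole v hv (Polynomial.X ^ (s i))
    simp only [Polynomial.eval_pow, Polynomial.eval_X, Polynomial.derivative_X_pow,
      Polynomial.eval_mul, Polynomial.eval_C, Polynomial.eval_natCast, integral_const_mul] at h3
    have h4 : ∫ y, y ^ ((Finsupp.single i 1 + s : ι →₀ ℕ) i) ∂(gaussianReal 0 v) =
      ∫ x, x * x ^ (s i) ∂(gaussianReal 0 v) := by
      congr 1; funext y; simp [pow_add]
    have h5 : ∫ y, y ^ ((s - Finsupp.single i 1 : ι →₀ ℕ) i) ∂(gaussianReal 0 v) =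
      ∫ x, x ^ (s i - 1) ∂(gaussianReal 0 v) := by
      congr 1; funext y; simp
    rw [h4, h5, h3]
    ring
  | add p q hp hq =>
    simp only [mul_add, map_add]
    rw [integral_add (csv_integrable_mv v _) (csv_integrable_mv v _),
      integral_add (csv_integrable_mv v _) (csv_integrable_mv v _), hp, hq]
    ring

lemma csv_exp_integrable (v : NNReal) : ∃ ε : ℝ, 0 < ε ∧
    Integrable (fun x : ι → ℝ => Real.exp (ε * ∑ i, x i ^ 2))
      (Measure.pi fun _ : ι => gaussianReal 0 v) := by
  obtain ⟨C, hC, h⟩ := IsGaussian.exists_integrable_exp_sq (gaussianReal 0 v)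
  refine ⟨C, hC, ?_⟩
  have := Integrable.fintype_prod (ι := ι) (μ := fun _ => gaussianReal 0 v) (f := fun i (y : ℝ) => Real.exp (C * ‖y‖ ^ 2))
      (fun i => h)
  convert! this using 1
  funext x
  rw [← Real.exp_sum, Finset.mul_sum]
  simp
end pi


noncomputable def csvD (m : ℕ) : Derivation ℝ (MvPolynomial ℕ ℝ) (MvPolynomial ℕ ℝ) :=
  MvPolynomial.mkDerivation ℝ (fun j => ((2 * j : ℕ) : MvPolynomial ℕ ℝ) * MvPolynomial.X (j + m))

noncomputable def csvc (N m : ℕ) : MvPolynomial ℕ ℝ :=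
  ((N + m : ℕ) : MvPolynomial ℕ ℝ) * MvPolynomial.X m +
    ∑ l ∈ Finset.range m, MvPolynomial.X (l + 1) * MvPolynomial.X (m - 1 - l)

noncomputable def csvS (n : ℕ) : Submodule ℝ (MvPolynomial ℕ ℝ) :=
  Submodule.span ℝ {f | ∃ L : List ℕ, L.sum ≤ n ∧ f = (L.map MvPolynomial.X).prod}

lemma csvS_mono {a b : ℕ} (h : a ≤ b) : csvS a ≤ csvS b :=
  Submodule.span_mono (by rintro f ⟨L, hL, rfl⟩; exact ⟨L, hL.trans h, rfl⟩)

lemma csvS_X {n b : ℕ} (j : ℕ) {f : MvPolynomial ℕ ℝ} (hf : f ∈ csvS n) (hb : j + n ≤ b) :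
    MvPolynomial.X j * f ∈ csvS b := by
  refine csvS_mono hb ?_
  induction hf using Submodule.span_induction with
  | mem f hf =>
    obtain ⟨L, hL, rfl⟩ := hf
    exact Submodule.subset_span ⟨j :: L, by simpa using hL, by simp⟩
  | zero => simp
  | add f g _ _ hf hg => rw [mul_add]; exact add_mem hf hg
  | smul c f _ hf => rw [mul_smul_comm]; exact Submodule.smul_mem _ _ hf

lemma csvS_nat {n : ℕ} (j : ℕ) {f : MvPolynomial ℕ ℝ} (hf : f ∈ csvS n) :
    (j : MvPolynomial ℕ ℝ) * f ∈ csvS n := by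
  have : (j : MvPolynomial ℕ ℝ) * f = (j : ℝ) • f := by
    rw [MvPolynomial.smul_eq_C_mul]; simp
  rw [this]
  exact Submodule.smul_mem _ _ hf

lemma csvS_c (N m : ℕ) {n : ℕ} {f : MvPolynomial ℕ ℝ} (hf : f ∈ csvS n) :
    csvc N m * f ∈ csvS (n + m) := by
  rw [csvc, add_mul, mul_assoc, Finset.sum_mul]
  refine add_mem (csvS_nat _ (csvS_X _ hf (by omega))) (Submodule.sum_mem _ fun l hl => ?_)
  rw [mul_assoc]
  have := Finset.mem_range.1 hl
  exact csvS_X _ (csvS_X (b := m - 1 - l + n) _ hf le_rfl) (by omega)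

lemma csvS_D (m : ℕ) (L : List ℕ) :
    csvD m (L.map MvPolynomial.X).prod ∈ csvS (L.sum + m) := by
  induction L with
  | nil => simp
  | cons j L ih =>
    simp only [List.map_cons, List.prod_cons, Derivation.leibniz, smul_eq_mul, List.sum_cons]
    refine add_mem (csvS_X _ ih (by omega)) ?_
    rw [csvD, MvPolynomial.mkDerivation_X, mul_comm, mul_assoc]
    refine csvS_nat _ (csvS_X _ (n := L.sum) ?_ (by omega))
    exact Submodule.subset_span ⟨L, le_rfl, rfl⟩

lemma csv_unique (N p : ℕ) (v : ℝ) (Φ : MvPolynomial ℕ ℝ →ₗ[ℝ] ℝ) (h1 : Φ 1 = 0)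
    (h0 : ∀ f, Φ (MvPolynomial.X 0 * f) = p * Φ f)
    (hs : ∀ m f, Φ (MvPolynomial.X (m + 1) * f) = v * Φ (csvD m f + csvc N m * f)) (f) :
    Φ f = 0 := by
  have key : ∀ n, csvS n ≤ LinearMap.ker Φ := by
    intro n
    induction n using Nat.strong_induction_on with
    | _ n ih =>
      rw [csvS, Submodule.span_le]
      rintro _ ⟨L, hL, rfl⟩
      rw [SetLike.mem_coe, LinearMap.mem_ker]
      induction L with
      | nil => simpa using h1
      | cons j L ihL =>
        simp only [List.map_cons, List.prod_cons, List.sum_cons] at hL ⊢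
        cases j with
        | zero => rw [h0, ihL (by omega), mul_zero]
        | succ m =>
          rw [hs]
          have : csvD m (L.map MvPolynomial.X).prod + csvc N m * (L.map MvPolynomial.X).prod
            ∈ csvS (L.sum + m) :=
            add_mem (csvS_D m L) (csvS_c N m (Submodule.subset_span ⟨L, le_rfl, rfl⟩))
          rw [LinearMap.mem_ker.1 (ih (L.sum + m) (by omega) this), mul_zero]
  have : ∃ n, f ∈ csvS n := by
    induction f using MvPolynomial.induction_on with
    | C a =>
      refine ⟨0, ?_⟩
      have : (MvPolynomial.C a : MvPolynomial ℕ ℝ) = a • 1 := by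
        rw [MvPolynomial.smul_eq_C_mul, mul_one]
      rw [this]
      exact Submodule.smul_mem _ _ (Submodule.subset_span ⟨[], by simp, by simp⟩)
    | add f g hf hg =>
      obtain ⟨a, ha⟩ := hf
      obtain ⟨b, hb⟩ := hg
      exact ⟨max a b, add_mem (csvS_mono (le_max_left _ _) ha) (csvS_mono (le_max_right _ _) hb)⟩
    | mul_X f j hf =>
      obtain ⟨a, ha⟩ := hf
      exact ⟨j + a, by rw [mul_comm]; exact csvS_X j ha le_rfl⟩
  obtain ⟨n, hn⟩ := this
  exact key n hn

lemma csv_aeval_D {R : Type*} [CommRing R] [Algebra ℝ R] (L : Derivation ℝ R R) (T : ℕ → R) (m : ℕ)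
    (h : ∀ j, L (T j) = (2 * j : ℕ) * T (j + m)) (f : MvPolynomial ℕ ℝ) :
    L (MvPolynomial.aeval T f) = MvPolynomial.aeval T (csvD m f) := by
  induction f using MvPolynomial.induction_on with
  | C a => simp [csvD]
  | add f g hf hg => simp [hf, hg]
  | mul_X f j hf =>
    simp only [map_mul, Derivation.leibniz, hf, MvPolynomial.aeval_X, smul_eq_mul, map_add]
    rw [h, csvD, MvPolynomial.mkDerivation_X]
    simp

/-! matrix side -/
section mat
set_option linter.unusedSectionVars false
variable {α β : Type*} [Fintype α] [Fintype β] [DecidableEq α] [DecidableEq β]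

lemma csv_map_mul {R : Type*} [CommRing R] [Algebra ℝ R] (D : Derivation ℝ R R)
    {a b c : Type*} [Fintype b] (A : Matrix a b R) (B : Matrix b c R) :
    (A * B).map D = A.map D * B + A * B.map D := by
  ext i j
  simp only [Matrix.map_apply, Matrix.mul_apply, Matrix.add_apply, map_sum, Derivation.leibniz,
    smul_eq_mul, ← Finset.sum_add_distrib]
  exact Finset.sum_congr rfl fun _ _ => by ring

lemma csv_map_pow {R : Type*} [CommRing R] [Algebra ℝ R] (D : Derivation ℝ R R)
    (G : Matrix β β R) (m : ℕ) :
    (G ^ m).map D = ∑ i ∈ Finset.range m, G ^ i * G.map D * G ^ (m - 1 - i) := by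
  induction m with
  | zero =>
    ext i j
    simp only [pow_zero, Matrix.map_apply, Finset.range_zero, Finset.sum_empty, Matrix.zero_apply,
      Matrix.one_apply]
    split_ifs <;> simp
  | succ m ih =>
    rw [pow_succ, csv_map_mul, ih, Finset.sum_range_succ, Finset.sum_mul]
    congr 1
    · refine Finset.sum_congr rfl fun i hi => ?_
      have := Finset.mem_range.1 hi
      rw [mul_assoc, ← pow_succ]
      congr 2; omega
    · simp

noncomputable def csvY (α β : Type*) : Matrix α β (MvPolynomial (α × β) ℝ) :=
  Matrix.of fun a b => MvPolynomial.X (a, b)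
noncomputable def csvG (α β : Type*) [Fintype α] : Matrix β β (MvPolynomial (α × β) ℝ) :=
  (csvY α β)ᵀ * csvY α β

lemma csv_dY (a : α) (b : β) : (csvY α β).map (MvPolynomial.pderiv (R := ℝ) (a, b)) =
    Matrix.single a b 1 := by
  ext i j
  simp only [csvY, Matrix.map_apply, Matrix.of_apply, MvPolynomial.pderiv_X, Matrix.single_apply,
    Pi.single_apply, Prod.mk.injEq]
  congr 1
  simp [eq_comm]

lemma csv_dG (a : α) (b : β) : (csvG α β).map (MvPolynomial.pderiv (R := ℝ) (a, b)) =
    Matrix.single b a (1 : MvPolynomial (α × β) ℝ) * csvY α β + (csvY α β)ᵀ * Matrix.single a b (1 : MvPolynomial (α × β) ℝ) := by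
  rw [csvG, csv_map_mul, csv_dY, Matrix.transpose_map, csv_dY, Matrix.transpose_single]

lemma csv_tr (A B : Matrix α β (MvPolynomial (α × β) ℝ)) :
    ∑ x : α × β, A x.1 x.2 * B x.1 x.2 = (Aᵀ * B).trace := by
  rw [Fintype.sum_prod_type, Finset.sum_comm]
  simp [Matrix.trace, Matrix.mul_apply]

lemma csv_Gt (m : ℕ) : ((csvG α β) ^ m)ᵀ = (csvG α β) ^ m := by
  rw [Matrix.transpose_pow]; congr 1
  simp [csvG, Matrix.transpose_mul]

lemma csv_YtY (i j : ℕ) : ((csvY α β * csvG α β ^ i)ᵀ * (csvY α β * csvG α β ^ j)).trace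
    = (csvG α β ^ (i + j + 1)).trace := by
  rw [Matrix.transpose_mul, csv_Gt, Matrix.mul_assoc, ← Matrix.mul_assoc (csvY α β)ᵀ, ← csvG, ← pow_succ',
    ← pow_add]
  congr 2

lemma csv_single_tr (M : Matrix β β (MvPolynomial (α × β) ℝ)) (a : α) (b : β)
    (hM : Mᵀ = M) : (M * (csvG α β).map (MvPolynomial.pderiv (R := ℝ) (a, b))).trace =
      2 * (csvY α β * M) a b := by
  rw [csv_dG, mul_add, Matrix.trace_add]
  have h1 : (M * (Matrix.single b a (1 : MvPolynomial (α × β) ℝ) * csvY α β)).trace = (csvY α β * M) a b := by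
    rw [Matrix.trace_mul_comm, Matrix.mul_assoc, Matrix.trace_mul_comm, Matrix.trace_mul_single]
    simp
  have h2 : (M * ((csvY α β)ᵀ * Matrix.single a b (1 : MvPolynomial (α × β) ℝ))).trace = (csvY α β * M) a b := by
    rw [← Matrix.mul_assoc, Matrix.trace_mul_single]
    conv_lhs => rw [← hM, ← Matrix.transpose_mul]
    simp
  rw [h1, h2]; ring

lemma csv_dT (j : ℕ) (a : α) (b : β) :
    MvPolynomial.pderiv (R := ℝ) (a, b) ((csvG α β ^ (j+1)).trace) =
      (2 * (j + 1) : ℕ) * (csvY α β * csvG α β ^ j) a b := by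
  have : MvPolynomial.pderiv (R := ℝ) (a, b) ((csvG α β ^ (j+1)).trace) =
    ((csvG α β ^ (j+1)).map (MvPolynomial.pderiv (R := ℝ) (a, b))).trace := by
    simp [Matrix.trace, map_sum]
  rw [this, csv_map_pow, Matrix.trace_sum]
  have : ∀ i ∈ Finset.range (j + 1), (csvG α β ^ i * (csvG α β).map (MvPolynomial.pderiv (R := ℝ) (a, b)) *
      csvG α β ^ (j + 1 - 1 - i)).trace = 2 * (csvY α β * csvG α β ^ j) a b := by
    intro i hi
    have := Finset.mem_range.1 hi
    rw [Matrix.trace_mul_comm, ← mul_assoc, ← pow_add, csv_single_tr _ _ _ (csv_Gt _)]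
    have : j + 1 - 1 - i + i = j := by omega
    rw [this]
  rw [Finset.sum_congr rfl this]
  simp only [Finset.sum_const, Finset.card_range, nsmul_eq_mul]
  push_cast; ring

noncomputable def csvL1 (α β : Type*) [Fintype α] [Fintype β] [DecidableEq β] (m : ℕ) :
    Derivation ℝ (MvPolynomial (α × β) ℝ) (MvPolynomial (α × β) ℝ) :=
  ∑ x : α × β, (csvY α β * csvG α β ^ m) x.1 x.2 • MvPolynomial.pderiv x

lemma csvL1_apply (m : ℕ) (F) : csvL1 α β m F =
    ∑ x : α × β, (csvY α β * csvG α β ^ m) x.1 x.2 * MvPolynomial.pderiv x F := by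
  have h := map_sum (Derivation.coeFnAddMonoidHom (R := ℝ) (A := MvPolynomial (α × β) ℝ) (M := MvPolynomial (α × β) ℝ))
    (fun x : α × β => (csvY α β * csvG α β ^ m) x.1 x.2 • MvPolynomial.pderiv (R := ℝ) x) Finset.univ
  have h2 := congrFun h F
  rw [Finset.sum_apply] at h2
  exact h2

lemma csvL1_T (m j : ℕ) : csvL1 α β m ((csvG α β ^ j).trace) =
    (2 * j : ℕ) * (csvG α β ^ (j + m)).trace := by
  rw [csvL1_apply]
  cases j with
  | zero => simp [Matrix.trace_one]
  | succ j =>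
    have : ∀ x : α × β, (csvY α β * csvG α β ^ m) x.1 x.2 *
      MvPolynomial.pderiv x (csvG α β ^ (j+1)).trace = (2 * (j + 1) : ℕ) *
      ((csvY α β * csvG α β ^ m) x.1 x.2 * (csvY α β * csvG α β ^ j) x.1 x.2) := by
      rintro ⟨a, b⟩
      rw [csv_dT]; ring
    simp_rw [this]
    rw [← Finset.mul_sum, csv_tr, csv_YtY]
    congr 3; omega

lemma csv_div (m : ℕ) : ∑ x : α × β, MvPolynomial.pderiv x ((csvY α β * csvG α β ^ m) x.1 x.2) =
    MvPolynomial.aeval (fun j => (csvG α β ^ j).trace) (csvc (Fintype.card α) m) := by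
  have h : ∀ a b, MvPolynomial.pderiv (a, b) ((csvY α β * csvG α β ^ m) a b) =
      (csvG α β ^ m) b b + ∑ i ∈ Finset.range m, (
        (csvY α β * csvG α β ^ i) a b * (csvY α β * csvG α β ^ (m - 1 - i)) a b +
        (csvY α β * csvG α β ^ i * (csvY α β)ᵀ) a a * (csvG α β ^ (m - 1 - i)) b b) := by
    intro a b
    have h1 : MvPolynomial.pderiv (R := ℝ) (a, b) ((csvY α β * csvG α β ^ m) a b) =
      ((csvY α β * csvG α β ^ m).map (MvPolynomial.pderiv (R := ℝ) (a, b))) a b := rfl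
    rw [h1, csv_map_mul, csv_map_pow, csv_dY, Matrix.add_apply, Matrix.mul_sum, Matrix.sum_apply]
    congr 1
    · simp
    · refine Finset.sum_congr rfl fun i _ => ?_
      rw [csv_dG]
      have : csvY α β * (csvG α β ^ i * (Matrix.single b a (1 : MvPolynomial (α × β) ℝ) * csvY α β + (csvY α β)ᵀ * Matrix.single a b (1 : MvPolynomial (α × β) ℝ))
        * csvG α β ^ (m - 1 - i)) = (csvY α β * csvG α β ^ i) * Matrix.single b a (1 : MvPolynomial (α × β) ℝ) *
          (csvY α β * csvG α β ^ (m - 1 - i)) + (csvY α β * csvG α β ^ i * (csvY α β)ᵀ) * Matrix.single a b (1 : MvPolynomial (α × β) ℝ) *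
          csvG α β ^ (m - 1 - i) := by
        simp only [Matrix.mul_add, Matrix.add_mul, Matrix.mul_assoc]
      rw [this, Matrix.add_apply]
      congr 1
      · rw [Matrix.mul_apply, Finset.sum_eq_single a]
        · simp
        · intro c _ hc; rw [Matrix.mul_single_apply_of_ne _ _ _ _ _ hc, zero_mul]
        · simp
      · rw [Matrix.mul_apply, Finset.sum_eq_single b]
        · simp
        · intro c _ hc; rw [Matrix.mul_single_apply_of_ne _ _ _ _ _ hc, zero_mul]
        · simp
  have h' : ∀ x : α × β, MvPolynomial.pderiv x ((csvY α β * csvG α β ^ m) x.1 x.2) = _ :=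
    fun x => h x.1 x.2
  simp_rw [h']
  rw [Finset.sum_add_distrib, Finset.sum_comm]
  have e1 : ∑ x : α × β, (csvG α β ^ m) x.2 x.2 = (Fintype.card α) * (csvG α β ^ m).trace := by
    rw [Fintype.sum_prod_type]
    simp [Matrix.trace]
  have e2 : ∀ i ∈ Finset.range m, ∑ x : α × β, ((csvY α β * csvG α β ^ i) x.1 x.2 * (csvY α β * csvG α β ^ (m - 1 - i)) x.1 x.2 +
        (csvY α β * csvG α β ^ i * (csvY α β)ᵀ) x.1 x.1 * (csvG α β ^ (m - 1 - i)) x.2 x.2) =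
        (csvG α β ^ m).trace + (csvG α β ^ (i + 1)).trace * (csvG α β ^ (m - 1 - i)).trace := by
    intro i hi
    have hi := Finset.mem_range.1 hi
    rw [Finset.sum_add_distrib, csv_tr, csv_YtY]
    congr 1
    · congr 2; omega
    · rw [Fintype.sum_prod_type]
      simp_rw [← Finset.mul_sum]
      rw [← Finset.sum_mul]
      congr 1
      change (csvY α β * csvG α β ^ i * (csvY α β)ᵀ).trace = _
      rw [Matrix.trace_mul_comm, ← Matrix.mul_assoc, ← csvG, ← pow_succ']
  rw [Finset.sum_congr rfl e2, e1, csvc, Finset.sum_add_distrib]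
  simp
  ring

lemma csv_Y_ident (m : ℕ) (f : MvPolynomial ℕ ℝ) :
    ∑ x : α × β, MvPolynomial.pderiv x ((csvY α β * csvG α β ^ m) x.1 x.2 *
      MvPolynomial.aeval (fun j => (csvG α β ^ j).trace) f) =
    MvPolynomial.aeval (fun j => (csvG α β ^ j).trace) (csvD m f + csvc (Fintype.card α) m * f) := by
  rw [map_add, map_mul, ← csv_div, ← csv_aeval_D (csvL1 α β m) _ m (csvL1_T m), csvL1_apply,
    Finset.sum_mul, ← Finset.sum_add_distrib]
  refine Finset.sum_congr rfl fun x _ => ?_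
  rw [Derivation.leibniz, smul_eq_mul, smul_eq_mul]
  ring

lemma csv_Y_dot (m : ℕ) (f : MvPolynomial ℕ ℝ) :
    ∑ x : α × β, MvPolynomial.X x * ((csvY α β * csvG α β ^ m) x.1 x.2 *
      MvPolynomial.aeval (fun j => (csvG α β ^ j).trace) f) =
    MvPolynomial.aeval (fun j => (csvG α β ^ j).trace) (MvPolynomial.X (m + 1) * f) := by
  simp_rw [← mul_assoc]
  rw [← Finset.sum_mul, map_mul, MvPolynomial.aeval_X]
  congr 1
  have := csv_tr (csvY α β * csvG α β ^ 0) (csvY α β * csvG α β ^ m)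
  rw [csv_YtY] at this
  simpa [csvY] using this
end mat


/-! eigenvalue side -/
noncomputable def csvT (p j : ℕ) : MvPolynomial (Fin p) ℝ := ∑ i, (MvPolynomial.X i) ^ (2 * j)

noncomputable def csvW (p q : ℕ) : MvPolynomial (Fin p) ℝ :=
  (∏ i, (MvPolynomial.X i) ^ q) *
    ∏ i, ∏ j ∈ Finset.Ioi i, ((MvPolynomial.X i) ^ 2 - (MvPolynomial.X j) ^ 2)

noncomputable def csvL2 (p m : ℕ) :
    Derivation ℝ (MvPolynomial (Fin p) ℝ) (MvPolynomial (Fin p) ℝ) :=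
  ∑ x : Fin p, ((MvPolynomial.X x : MvPolynomial (Fin p) ℝ) ^ (2 * m + 1)) • MvPolynomial.pderiv x

lemma csvL2_apply (p m : ℕ) (F) : csvL2 p m F =
    ∑ x : Fin p, (MvPolynomial.X x) ^ (2 * m + 1) * MvPolynomial.pderiv x F := by
  have h := map_sum (Derivation.coeFnAddMonoidHom (R := ℝ) (A := MvPolynomial (Fin p) ℝ)
    (M := MvPolynomial (Fin p) ℝ))
    (fun x : Fin p => ((MvPolynomial.X x : MvPolynomial (Fin p) ℝ) ^ (2 * m + 1)) •
      MvPolynomial.pderiv (R := ℝ) x) Finset.univ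
  have h2 := congrFun h F
  rw [Finset.sum_apply] at h2
  exact h2

lemma csvL2_X (p m : ℕ) (i : Fin p) : csvL2 p m (MvPolynomial.X i) =
    (MvPolynomial.X i) ^ (2 * m + 1) := by
  rw [csvL2_apply, Finset.sum_eq_single i]
  · simp
  · intro j _ hj
    rw [MvPolynomial.pderiv_X_of_ne hj.symm, mul_zero]
  · simp

lemma csvL2_pow (p m q : ℕ) (i : Fin p) : csvL2 p m ((MvPolynomial.X i) ^ q) =
    ((q : MvPolynomial (Fin p) ℝ) * (MvPolynomial.X i) ^ (2 * m)) * (MvPolynomial.X i) ^ q := by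
  rw [Derivation.leibniz_pow, csvL2_X]
  cases q with
  | zero => simp
  | succ q => simp; ring

lemma csvL2_T (p m j : ℕ) : csvL2 p m (csvT p j) = (2 * j : ℕ) * csvT p (j + m) := by
  rw [csvT, map_sum, csvT, Finset.mul_sum]
  refine Finset.sum_congr rfl fun i _ => ?_
  rw [csvL2_pow]; ring

lemma csv_der_prod {R ι : Type*} [CommRing R] [Algebra ℝ R] (D : Derivation ℝ R R)
    (s : Finset ι) (f k : ι → R) (h : ∀ i ∈ s, D (f i) = k i * f i) :
    D (∏ i ∈ s, f i) = (∑ i ∈ s, k i) * ∏ i ∈ s, f i := by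
  classical
  induction s using Finset.induction_on with
  | empty => simp
  | insert a s ha ih =>
    rw [Finset.prod_insert ha, Finset.sum_insert ha, Derivation.leibniz,
      ih (fun i hi => h i (Finset.mem_insert_of_mem hi)), h a (Finset.mem_insert_self _ _)]
    simp only [smul_eq_mul]
    ring

noncomputable def csvK (p m : ℕ) (i j : Fin p) : MvPolynomial (Fin p) ℝ :=
  ∑ l ∈ Finset.range (m + 1), (MvPolynomial.X i ^ 2) ^ l * (MvPolynomial.X j ^ 2) ^ (m - l)

lemma csvK_symm (p m : ℕ) (i j : Fin p) : csvK p m i j = csvK p m j i := by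
  rw [csvK, csvK, ← Finset.sum_range_reflect]
  refine Finset.sum_congr rfl fun l hl => ?_
  have := Finset.mem_range.1 hl
  have e1 : m + 1 - 1 - l = m - l := by omega
  have e2 : m - (m - l) = l := by omega
  rw [e1, e2, mul_comm]

lemma csvL2_W (p q m : ℕ) : csvL2 p m (csvW p q) =
    ((q : MvPolynomial (Fin p) ℝ) * csvT p m + ∑ i, ∑ j ∈ Finset.Ioi i, 2 * csvK p m i j) * csvW p q := by
  have h1 : csvL2 p m (∏ i, (MvPolynomial.X i) ^ q) = ((q : MvPolynomial (Fin p) ℝ) * csvT p m) *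
      ∏ i, (MvPolynomial.X i) ^ q := by
    rw [csv_der_prod _ _ _ _ (fun i _ => csvL2_pow p m q i), csvT, Finset.mul_sum]
  have h2 := csv_der_prod (csvL2 p m) Finset.univ
    (fun i => ∏ j ∈ Finset.Ioi i, ((MvPolynomial.X i) ^ 2 - (MvPolynomial.X j) ^ 2))
    (fun i => ∑ j ∈ Finset.Ioi i, 2 * csvK p m i j) (fun i _ => by
      refine csv_der_prod _ _ _ _ fun j _ => ?_
      rw [map_sub, csvL2_pow, csvL2_pow, csvK]
      have := geom_sum₂_mul (MvPolynomial.X i ^ 2 : MvPolynomial (Fin p) ℝ) (MvPolynomial.X j ^ 2) (m + 1)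
      simp only [Nat.add_sub_cancel] at this
      rw [mul_assoc 2, this]
      push_cast; ring)
  rw [csvW, Derivation.leibniz, h1, h2]
  simp only [smul_eq_mul]
  ring

lemma csvK_sum (p m : ℕ) : ∑ i, ∑ j ∈ Finset.Ioi i, 2 * csvK p m i j + (m + 1 : MvPolynomial (Fin p) ℝ) * csvT p m =
    ∑ l ∈ Finset.range (m + 1), csvT p l * csvT p (m - l) := by
  have h := Finset.sum_sum_Ioi_add_eq_sum_sum_off_diag (fun i j => csvK p m i j)
  have h1 : ∑ i, ∑ j ∈ Finset.Ioi i, 2 * csvK p m i j =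
    ∑ i, ∑ j ∈ Finset.Ioi i, (csvK p m j i + csvK p m i j) := by
    refine Finset.sum_congr rfl fun i _ => Finset.sum_congr rfl fun j _ => ?_
    rw [csvK_symm p m j i]; ring
  rw [h1, h]
  have h2 : (m + 1 : MvPolynomial (Fin p) ℝ) * csvT p m = ∑ i, csvK p m i i := by
    rw [csvT, Finset.mul_sum]
    refine Finset.sum_congr rfl fun i _ => ?_
    rw [csvK, Finset.sum_congr rfl (g := fun _ => (MvPolynomial.X i ^ 2) ^ m)]
    · simp [← pow_mul]
    · intro l hl
      have := Finset.mem_range.1 hl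
      rw [← pow_add]; congr 1; omega
  rw [h2, ← Finset.sum_add_distrib]
  have h3 : ∀ i, ∑ j ∈ {i}ᶜ, csvK p m j i + csvK p m i i = ∑ j, csvK p m j i := by
    intro i
    rw [← Finset.sum_compl_add_sum {i}]
    simp
  simp_rw [h3, csvK]
  rw [Finset.sum_comm, Finset.sum_congr rfl (fun _ _ => Finset.sum_comm), Finset.sum_comm]
  refine Finset.sum_congr rfl fun l _ => ?_
  simp only [csvT, Finset.sum_mul_sum, ← pow_mul]

lemma csv_x_ident (p q m : ℕ) (f : MvPolynomial ℕ ℝ) :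
    ∑ i : Fin p, MvPolynomial.pderiv i ((MvPolynomial.X i) ^ (2 * m + 1) *
      (MvPolynomial.aeval (csvT p) f * csvW p q)) =
    MvPolynomial.aeval (csvT p) (csvD m f + csvc (q + p) m * f) * csvW p q := by
  have h1 : ∑ i : Fin p, MvPolynomial.pderiv i ((MvPolynomial.X i) ^ (2 * m + 1) *
      (MvPolynomial.aeval (csvT p) f * csvW p q)) = (2 * m + 1 : MvPolynomial (Fin p) ℝ) * csvT p m *
      (MvPolynomial.aeval (csvT p) f * csvW p q) +
      csvL2 p m (MvPolynomial.aeval (csvT p) f * csvW p q) := by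
    rw [csvL2_apply, csvT, Finset.mul_sum, Finset.sum_mul, ← Finset.sum_add_distrib]
    refine Finset.sum_congr rfl fun i _ => ?_
    rw [Derivation.leibniz, Derivation.leibniz_pow]
    simp
    ring
  rw [h1, Derivation.leibniz, csvL2_W, csv_aeval_D (csvL2 p m) _ m (csvL2_T p m)]
  have h2 := csvK_sum p m
  rw [Finset.sum_range_succ'] at h2
  have h3 : csvT p 0 = p := by simp [csvT]
  have h4 : MvPolynomial.aeval (csvT p) (csvc (q + p) m) = (q + p + m : MvPolynomial (Fin p) ℝ) * csvT p m +
    ∑ l ∈ Finset.range m, csvT p (l + 1) * csvT p (m - (l + 1)) := by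
    rw [csvc, map_add, map_sum]
    congr 1
    · simp
    · refine Finset.sum_congr rfl fun l _ => ?_
      have : m - 1 - l = m - (l + 1) := by omega
      simp [this]
  rw [map_add, map_mul, h4]
  simp only [smul_eq_mul, h3, Nat.sub_zero] at h2 ⊢
  linear_combination (MvPolynomial.aeval (csvT p) f * csvW p q) * h2

lemma csv_x_dot (p q m : ℕ) (f : MvPolynomial ℕ ℝ) :
    ∑ i : Fin p, MvPolynomial.X i * ((MvPolynomial.X i) ^ (2 * m + 1) *
      (MvPolynomial.aeval (csvT p) f * csvW p q)) =
    MvPolynomial.aeval (csvT p) (MvPolynomial.X (m + 1) * f) * csvW p q := by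
  rw [map_mul, MvPolynomial.aeval_X, csvT, mul_assoc, Finset.sum_mul]
  exact Finset.sum_congr rfl fun i _ => by ring


def csvC (p : ℕ) : Set (Fin p → ℝ) := {x | (∀ i j, i < j → x j < x i) ∧ ∀ i, 0 < x i}

lemma csvC_open (p : ℕ) : IsOpen (csvC p) := by
  have : csvC p = (⋂ i, ⋂ j, ⋂ (_ : i < j), {x : Fin p → ℝ | x j < x i}) ∩
      ⋂ i, {x : Fin p → ℝ | 0 < x i} := by
    ext x
    simp [csvC]
  rw [this]
  refine IsOpen.inter ?_ ?_
  · refine isOpen_iInter_of_finite fun i => isOpen_iInter_of_finite fun j =>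
      isOpen_iInter_of_finite fun _ => ?_
    exact isOpen_lt (continuous_apply j) (continuous_apply i)
  · exact isOpen_iInter_of_finite fun i => isOpen_lt continuous_const (continuous_apply i)

noncomputable def csvlo {p : ℕ} (x : Fin p → ℝ) (i : Fin p) : ℝ :=
  if h : (i : ℕ) + 1 < p then x ⟨i + 1, h⟩ else 0

lemma csv_slice {p : ℕ} (x : Fin p → ℝ) (hx : x ∈ csvC p) (i : Fin p) (z : ℝ) :
    Function.update x i z ∈ csvC p ↔ csvlo x i < z ∧ ∀ j, j < i → z < x j := by
  obtain ⟨h1, h2⟩ := hx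
  constructor
  · rintro ⟨h3, h4⟩
    refine ⟨?_, fun j hj => ?_⟩
    · rw [csvlo]
      split_ifs with h
      · have hlt : i < ⟨i + 1, h⟩ := by rw [Fin.lt_def]; simp
        have := h3 i ⟨i + 1, h⟩ hlt
        rwa [Function.update_self, Function.update_of_ne hlt.ne'] at this
      · simpa using h4 i
    · have := h3 j i hj
      rwa [Function.update_self, Function.update_of_ne hj.ne] at this
  · rintro ⟨h3, h4⟩
    have hlo : 0 ≤ csvlo x i := by
      rw [csvlo]; split_ifs
      · exact (h2 _).le
      · exact le_rfl
    have hlo2 : ∀ j, i < j → x j ≤ csvlo x i := by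
      intro j hj
      have hj' : (i : ℕ) < j := hj
      have h : (i : ℕ) + 1 < p := by omega
      rw [csvlo, dif_pos h]
      rcases eq_or_lt_of_le (show (i : ℕ) + 1 ≤ j by omega) with h5 | h5
      · have : (⟨i + 1, h⟩ : Fin p) = j := Fin.ext h5
        rw [this]
      · exact (h1 ⟨i + 1, h⟩ j h5).le
    refine ⟨fun a b hab => ?_, fun a => ?_⟩
    · by_cases ha : a = i
      · subst ha
        rw [Function.update_self, Function.update_of_ne hab.ne']
        exact (hlo2 b hab).trans_lt h3
      · rw [Function.update_of_ne ha]
        by_cases hb : b = i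
        · subst hb
          rw [Function.update_self]; exact h4 a hab
        · rw [Function.update_of_ne hb]; exact h1 a b hab
    · by_cases ha : a = i
      · subst ha
        rw [Function.update_self]; linarith
      · rw [Function.update_of_ne ha]; exact h2 a

noncomputable def csvRes {p : ℕ} (x : Fin p → ℝ) (i : Fin p) :
    MvPolynomial (Fin p) ℝ →ₐ[ℝ] Polynomial ℝ :=
  MvPolynomial.aeval (fun j => if j = i then Polynomial.X else Polynomial.C (x j))

lemma csvRes_eval {p : ℕ} (x : Fin p → ℝ) (i : Fin p) (F) (z : ℝ) :
    (csvRes x i F).eval z = MvPolynomial.eval (Function.update x i z) F := by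
  induction F using MvPolynomial.induction_on with
  | C a => simp [csvRes]
  | add f g hf hg => simp [hf, hg]
  | mul_X f j hf =>
    rw [map_mul, Polynomial.eval_mul, hf, map_mul, csvRes, MvPolynomial.aeval_X,
      MvPolynomial.eval_X]
    congr 1
    by_cases h : j = i
    · subst h; simp
    · simp [h]

lemma csvRes_deriv {p : ℕ} (x : Fin p → ℝ) (i : Fin p) (F) :
    (csvRes x i F).derivative = csvRes x i (MvPolynomial.pderiv i F) := by
  induction F using MvPolynomial.induction_on with
  | C a => simp [csvRes]
  | add f g hf hg => simp [hf, hg]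
  | mul_X f j hf =>
    rw [map_mul, Polynomial.derivative_mul, hf, Derivation.leibniz, map_add, smul_eq_mul,
      smul_eq_mul, map_mul, map_mul]
    have : (csvRes x i (MvPolynomial.X j)).derivative =
      csvRes x i (MvPolynomial.pderiv i (MvPolynomial.X j)) := by
      by_cases h : j = i
      · subst h; simp [csvRes]
      · rw [MvPolynomial.pderiv_X_of_ne h]
        simp [csvRes, h]
    rw [this]; ring

lemma csvW_zero {p : ℕ} (q : ℕ) (x : Fin p → ℝ) (a b : Fin p) (hab : a < b) (h : x a = x b) :
    MvPolynomial.eval x (csvW p q) = 0 := by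
  rw [csvW, map_mul, map_prod (MvPolynomial.eval x) (fun i => ∏ j ∈ Finset.Ioi i, _)]
  refine mul_eq_zero_of_right _ (Finset.prod_eq_zero (Finset.mem_univ a) ?_)
  rw [map_prod]
  rw [Finset.prod_eq_zero (Finset.mem_Ioi.2 hab)]
  simp [h]

lemma csv_x_slice {p : ℕ} (v : NNReal) (hv : v ≠ 0) (q : ℕ) (x : Fin p → ℝ) (hx : x ∈ csvC p)
    (i : Fin p) (A : MvPolynomial (Fin p) ℝ) (F : MvPolynomial (Fin p) ℝ)
    (hF : F = MvPolynomial.X i * A * csvW p q) :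
    ∫ z in {z | Function.update x i z ∈ csvC p},
      MvPolynomial.eval (Function.update x i z) (MvPolynomial.C (v : ℝ) * MvPolynomial.pderiv i F
        - MvPolynomial.X i * F) ∂(gaussianReal 0 v) = 0 := by
  have := csv_ibp1_set v hv (csvRes x i F) (csvlo x i) (fun j : Fin p => j < i) x ?_ ?_
  · refine Eq.trans ?_ this
    have hs : {z | Function.update x i z ∈ csvC p} =
        {z | csvlo x i < z ∧ ∀ j, j < i → z < x j} := by
      ext z; exact csv_slice x hx i z
    rw [hs]
    congr 1
    ext z
    rw [csvRes_deriv, csvRes_eval, csvRes_eval]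
    simp
  · rw [csvRes_eval, hF, map_mul, map_mul, csvlo]
    split_ifs with h
    · have hlt : i < ⟨i + 1, h⟩ := by rw [Fin.lt_def]; simp
      rw [csvW_zero q _ i ⟨i + 1, h⟩ hlt, mul_zero]
      rw [Function.update_self, Function.update_of_ne hlt.ne']
    · simp
  · intro j hj
    rw [csvRes_eval, hF, map_mul, csvW_zero q _ j i hj, mul_zero]
    rw [Function.update_self, Function.update_of_ne hj.ne]

lemma csv_insertNth_update {n : ℕ} (i : Fin (n + 1)) (z z0 : ℝ) (y : Fin n → ℝ) :
    (i.insertNth z y : Fin (n+1) → ℝ) = Function.update (i.insertNth z0 y : Fin (n+1) → ℝ) i z := by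
  simp

lemma csv_x_int {p : ℕ} (v : NNReal) (hv : v ≠ 0) (q : ℕ)
    (i : Fin p) (A : MvPolynomial (Fin p) ℝ) (F : MvPolynomial (Fin p) ℝ)
    (hF : F = MvPolynomial.X i * A * csvW p q) :
    ∫ x in csvC p,
      MvPolynomial.eval x (MvPolynomial.C (v : ℝ) * MvPolynomial.pderiv i F
        - MvPolynomial.X i * F) ∂(Measure.pi fun _ => gaussianReal 0 v) = 0 := by
  obtain ⟨n, rfl⟩ : ∃ n, p = n + 1 := ⟨p - 1, by have := i.2; omega⟩
  set H := MvPolynomial.C (v : ℝ) * MvPolynomial.pderiv i F - MvPolynomial.X i * F with hH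
  have hm : MeasurableSet (csvC (n+1)) := (csvC_open _).measurableSet
  rw [← integral_indicator hm]
  have mp := (measurePreserving_piFinSuccAbove (fun _ : Fin (n+1) => gaussianReal 0 v) i).symm
  rw [← mp.integral_comp']
  have hintg : Integrable ((csvC (n+1)).indicator fun x => MvPolynomial.eval x H)
    (Measure.pi fun _ => gaussianReal 0 v) := (csv_integrable_mv v H).indicator hm
  rw [integral_prod_symm]
  swap
  · exact mp.integrable_comp_of_integrable hintg
  refine integral_eq_zero_of_ae (Filter.Eventually.of_forall fun y => ?_)
  simp only [Pi.zero_apply]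
  change ∫ z, (csvC (n+1)).indicator (fun x => MvPolynomial.eval x H) (i.insertNth z y) ∂_ = 0
  by_cases h : ∃ z0, (i.insertNth z0 y : Fin (n+1) → ℝ) ∈ csvC (n+1)
  · obtain ⟨z0, h0⟩ := h
    have := csv_x_slice v hv q _ h0 i A F hF
    rw [← integral_indicator] at this
    · refine Eq.trans ?_ this
      congr 1
      ext z
      rw [csv_insertNth_update i z z0 y]
      rfl
    · exact (((csvC_open _)).preimage (continuous_const.update i continuous_id)).measurableSet
  · push Not at h
    simp [Set.indicator_of_notMem (h _)]

lemma csv_x_rec (p q : ℕ) (v : NNReal) (hv : v ≠ 0) (m : ℕ) (f : MvPolynomial ℕ ℝ) :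
    ∫ x in csvC p, MvPolynomial.eval x
      (MvPolynomial.aeval (csvT p) (MvPolynomial.X (m + 1) * f) * csvW p q)
      ∂(Measure.pi fun _ => gaussianReal 0 v) =
    v * ∫ x in csvC p, MvPolynomial.eval x
      (MvPolynomial.aeval (csvT p) (csvD m f + csvc (q + p) m * f) * csvW p q)
      ∂(Measure.pi fun _ => gaussianReal 0 v) := by
  rw [← csv_x_ident, ← csv_x_dot, ← integral_const_mul, eq_comm, ← sub_eq_zero, ← integral_sub]
  rotate_left
  · exact ((csv_integrable_mv v _).const_mul _).integrableOn
  · exact (csv_integrable_mv v _).integrableOn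
  have : ∀ x : Fin p → ℝ, v * MvPolynomial.eval x (∑ i : Fin p, MvPolynomial.pderiv i
      ((MvPolynomial.X i) ^ (2 * m + 1) * (MvPolynomial.aeval (csvT p) f * csvW p q))) -
      MvPolynomial.eval x (∑ i : Fin p, MvPolynomial.X i * ((MvPolynomial.X i) ^ (2 * m + 1) *
      (MvPolynomial.aeval (csvT p) f * csvW p q))) =
      ∑ i : Fin p, MvPolynomial.eval x (MvPolynomial.C (v : ℝ) * MvPolynomial.pderiv i
      ((MvPolynomial.X i) ^ (2 * m + 1) * (MvPolynomial.aeval (csvT p) f * csvW p q)) -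
       MvPolynomial.X i * ((MvPolynomial.X i) ^ (2 * m + 1) *
      (MvPolynomial.aeval (csvT p) f * csvW p q))) := by
    intro x
    simp only [map_sum, map_sub, Finset.sum_sub_distrib, map_mul (MvPolynomial.eval x) (MvPolynomial.C _),
      MvPolynomial.eval_C, Finset.mul_sum]
  simp_rw [this]
  rw [integral_finsetSum _ fun i _ => (csv_integrable_mv v _).integrableOn]
  refine Finset.sum_eq_zero fun i _ => ?_
  exact csv_x_int v hv q i ((MvPolynomial.X i) ^ (2 * m) * MvPolynomial.aeval (csvT p) f) _ (by ring)


lemma csv_Y_rec (N p : ℕ) (v : NNReal) (hv : v ≠ 0) (m : ℕ) (f : MvPolynomial ℕ ℝ) :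
    ∫ y : Fin N × Fin p → ℝ, MvPolynomial.eval y
      (MvPolynomial.aeval (fun j => (csvG (Fin N) (Fin p) ^ j).trace) (MvPolynomial.X (m + 1) * f))
      ∂(Measure.pi fun _ => gaussianReal 0 v) =
    v * ∫ y : Fin N × Fin p → ℝ, MvPolynomial.eval y
      (MvPolynomial.aeval (fun j => (csvG (Fin N) (Fin p) ^ j).trace)
        (csvD m f + csvc N m * f)) ∂(Measure.pi fun _ => gaussianReal 0 v) := by
  have h1 := csv_Y_ident (α := Fin N) (β := Fin p) m f
  have h2 := csv_Y_dot (α := Fin N) (β := Fin p) m f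
  rw [Fintype.card_fin] at h1
  rw [← h1, ← h2]
  simp only [map_sum]
  rw [integral_finsetSum _ fun i _ => (csv_integrable_mv v _),
    integral_finsetSum _ fun i _ => (csv_integrable_mv v _), Finset.mul_sum]
  exact Finset.sum_congr rfl fun i _ => csv_stein v hv i _

noncomputable def csvPhi (N p : ℕ) (v : NNReal) (M : ℝ) : MvPolynomial ℕ ℝ →ₗ[ℝ] ℝ where
  toFun f := M * (∫ y : Fin N × Fin p → ℝ, MvPolynomial.eval y
      (MvPolynomial.aeval (fun j => (csvG (Fin N) (Fin p) ^ j).trace) f)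
      ∂(Measure.pi fun _ => gaussianReal 0 v)) -
    ∫ x in csvC p, MvPolynomial.eval x
      (MvPolynomial.aeval (csvT p) f * csvW p (N - p))
      ∂(Measure.pi fun _ => gaussianReal 0 v)
  map_add' f g := by
    simp only [map_add, add_mul]
    rw [integral_add (csv_integrable_mv v _) (csv_integrable_mv v _),
      integral_add (csv_integrable_mv v _).integrableOn (csv_integrable_mv v _).integrableOn]
    ring
  map_smul' c f := by
    simp only [map_smul, smul_mul_assoc, MvPolynomial.smul_eval,
      integral_const_mul, RingHom.id_apply, smul_eq_mul]
    ring

lemma csv_moment (N p : ℕ) (hNp : p ≤ N) (v : NNReal) (hv : v ≠ 0) (f : MvPolynomial ℕ ℝ) :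
    (∫ x in csvC p, MvPolynomial.eval x (csvW p (N - p)) ∂(Measure.pi fun _ => gaussianReal 0 v)) *
    (∫ y : Fin N × Fin p → ℝ, MvPolynomial.eval y
      (MvPolynomial.aeval (fun j => (csvG (Fin N) (Fin p) ^ j).trace) f)
      ∂(Measure.pi fun _ => gaussianReal 0 v)) =
    ∫ x in csvC p, MvPolynomial.eval x
      (MvPolynomial.aeval (csvT p) f * csvW p (N - p))
      ∂(Measure.pi fun _ => gaussianReal 0 v) := by
  have := csv_unique N p v (csvPhi N p v
    (∫ x in csvC p, MvPolynomial.eval x (csvW p (N - p)) ∂(Measure.pi fun _ => gaussianReal 0 v)))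
    ?_ ?_ ?_ f
  · exact sub_eq_zero.1 this
  · simp [csvPhi]
  · intro f
    have e : csvT p 0 = MvPolynomial.C (p : ℝ) := by simp [csvT]
    have e' : (csvG (Fin N) (Fin p) ^ 0).trace = MvPolynomial.C (p : ℝ) := by
      simp [Matrix.trace_one]
    simp only [csvPhi, LinearMap.coe_mk, AddHom.coe_mk, map_mul, MvPolynomial.aeval_X, e, e',
      MvPolynomial.eval_C, integral_const_mul, mul_assoc]
    ring
  · intro m f
    simp only [csvPhi, LinearMap.coe_mk, AddHom.coe_mk]
    rw [csv_Y_rec N p v hv, csv_x_rec p (N - p) v hv, Nat.sub_add_cancel hNp]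
    ring

lemma csv_sym_psum (p : ℕ) (Q : MvPolynomial (Fin p) ℝ) (hQ : Q.IsSymmetric) :
    ∃ f : MvPolynomial ℕ ℝ, MvPolynomial.aeval (fun j => MvPolynomial.psum (Fin p) ℝ j) f = Q := by
  set R := (MvPolynomial.aeval (R := ℝ) (fun j => MvPolynomial.psum (Fin p) ℝ j)).range with hR
  have hp : ∀ j, MvPolynomial.psum (Fin p) ℝ j ∈ R := fun j => ⟨MvPolynomial.X j, by simp⟩
  have he : ∀ k, MvPolynomial.esymm (Fin p) ℝ k ∈ R := by
    intro k
    induction k using Nat.strong_induction_on with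
    | _ k ih =>
      rcases Nat.eq_zero_or_pos k with h0 | h0
      · subst h0; simp [R.one_mem]
      · have h := MvPolynomial.mul_esymm_eq_sum (Fin p) ℝ k
        have hk : (k : ℝ) ≠ 0 := by positivity
        have h2 : (k : MvPolynomial (Fin p) ℝ) * MvPolynomial.esymm (Fin p) ℝ k ∈ R := by
          rw [h]
          refine R.mul_mem (R.pow_mem (R.neg_mem R.one_mem) _) (R.sum_mem fun a ha => ?_)
          simp only [Finset.mem_filter] at ha
          exact R.mul_mem (R.mul_mem (R.pow_mem (R.neg_mem R.one_mem) _) (ih _ ha.2)) (hp _)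
        have h3 := R.smul_mem h2 (k : ℝ)⁻¹
        have : (k : ℝ)⁻¹ • ((k : MvPolynomial (Fin p) ℝ) * MvPolynomial.esymm (Fin p) ℝ k) =
          MvPolynomial.esymm (Fin p) ℝ k := by
          have : (k : MvPolynomial (Fin p) ℝ) * MvPolynomial.esymm (Fin p) ℝ k =
            (k : ℝ) • MvPolynomial.esymm (Fin p) ℝ k := by
            rw [MvPolynomial.smul_eq_C_mul]; simp
          rw [this, smul_smul, inv_mul_cancel₀ hk, one_smul]
        rwa [this] at h3
  obtain ⟨g, hg⟩ := MvPolynomial.esymmAlgHom_surjective (σ := Fin p) ℝ (n := p) (by simp) (⟨Q, hQ⟩ : MvPolynomial.symmetricSubalgebra (Fin p) ℝ)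
  have h4 : Q = MvPolynomial.aeval (fun i : Fin p => MvPolynomial.esymm (Fin p) ℝ (i + 1)) g := by
    have := congrArg Subtype.val hg
    rw [MvPolynomial.esymmAlgHom_apply] at this
    exact this.symm
  have h5 : ∀ g : MvPolynomial (Fin p) ℝ,
      MvPolynomial.aeval (fun i : Fin p => MvPolynomial.esymm (Fin p) ℝ (i + 1)) g ∈ R := by
    intro g
    induction g using MvPolynomial.induction_on with
    | C a => simpa using R.algebraMap_mem a
    | add f g hf hg => rw [map_add]; exact R.add_mem hf hg
    | mul_X f j hf => rw [map_mul, MvPolynomial.aeval_X]; exact R.mul_mem hf (he _)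
  have : Q ∈ R := by rw [h4]; exact h5 g
  exact this


noncomputable def csvQ (p : ℕ) (L : StrongDual ℝ (Fin p → ℝ)) (n : ℕ) : MvPolynomial (Fin p) ℝ :=
  ∑ π : Equiv.Perm (Fin p), (∑ i, MvPolynomial.C (L (Pi.single i 1)) * MvPolynomial.X (π i)) ^ n

lemma csvQ_symm (p : ℕ) (L : StrongDual ℝ (Fin p → ℝ)) (n : ℕ) : (csvQ p L n).IsSymmetric := by
  intro e
  rw [csvQ, map_sum]
  simp only [map_pow, map_sum, map_mul, MvPolynomial.rename_C, MvPolynomial.rename_X]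
  exact Equiv.sum_comp (Equiv.mulLeft e) (fun π : Equiv.Perm (Fin p) => (∑ i, MvPolynomial.C (L (Pi.single i 1)) * MvPolynomial.X (π i)) ^ n)

lemma csv_L_expand (p : ℕ) (L : StrongDual ℝ (Fin p → ℝ)) (x : Fin p → ℝ) :
    L x = ∑ i, L (Pi.single i 1) * x i := by
  conv_lhs => rw [pi_eq_sum_univ' x]
  rw [map_sum]
  refine Finset.sum_congr rfl fun i _ => ?_
  rw [map_smul, smul_eq_mul, mul_comm]

lemma csvQ_eval (p : ℕ) (L : StrongDual ℝ (Fin p → ℝ)) (n : ℕ) (x : Fin p → ℝ) :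
    MvPolynomial.eval x (csvQ p L n) = ∑ π : Equiv.Perm (Fin p), (L fun i => x (π i)) ^ n := by
  rw [csvQ, map_sum]
  refine Finset.sum_congr rfl fun π _ => ?_
  rw [csv_L_expand]
  simp

noncomputable def csvSym {Ω : Type*} [MeasurableSpace Ω] {p : ℕ} (m : Measure Ω)
    (a : Ω → Fin p → ℝ) : Measure (Fin p → ℝ) :=
  ∑ π : Equiv.Perm (Fin p), Measure.map (fun ω i => a ω (π i)) m

lemma csv_perm_meas {Ω : Type*} [MeasurableSpace Ω] {p : ℕ} (a : Ω → Fin p → ℝ) (ha : Measurable a)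
    (π : Equiv.Perm (Fin p)) : Measurable (fun ω i => a ω (π i)) :=
  measurable_pi_lambda _ fun i => (measurable_pi_apply (π i)).comp ha

lemma csvSym_int {Ω : Type*} [MeasurableSpace Ω] {p : ℕ} (m : Measure Ω)
    (a : Ω → Fin p → ℝ) (ha : Measurable a) (h0 : ∀ ω i, 0 ≤ a ω i) (ε : ℝ)
    (hi : Integrable (fun ω => Real.exp (ε * ∑ i, a ω i)) m)
    (L : StrongDual ℝ (Fin p → ℝ)) (t : ℝ) (ht : |t| * ‖L‖ ≤ ε) :
    Integrable (fun x => Real.exp (t * L x)) (csvSym m a) := by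
  rw [csvSym, integrable_finsetSum_measure]
  intro π _
  rw [integrable_map_measure (by fun_prop) (csv_perm_meas a ha π).aemeasurable]
  refine hi.mono' (by have := csv_perm_meas a ha π; exact Measurable.aestronglyMeasurable (by fun_prop))
    (Filter.Eventually.of_forall fun ω => ?_)
  simp only [Function.comp]
  rw [Real.norm_eq_abs, Real.abs_exp, Real.exp_le_exp]
  have hs : 0 ≤ ∑ i, a ω i := Finset.sum_nonneg fun i _ => h0 ω i
  have h1 : |L fun i => a ω (π i)| ≤ ‖L‖ * ∑ i, a ω i := by
    refine (L.le_opNorm _).trans (mul_le_mul_of_nonneg_left ?_ (norm_nonneg _))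
    rw [pi_norm_le_iff_of_nonneg hs]
    intro i
    rw [Real.norm_eq_abs, abs_of_nonneg (h0 _ _)]
    exact Finset.single_le_sum (f := a ω) (fun i _ => h0 ω i) (Finset.mem_univ _)
  calc t * L _ ≤ |t * L fun i => a ω (π i)| := le_abs_self _
    _ = |t| * |L fun i => a ω (π i)| := abs_mul _ _
    _ ≤ |t| * (‖L‖ * ∑ i, a ω i) := mul_le_mul_of_nonneg_left h1 (abs_nonneg _)
    _ = (|t| * ‖L‖) * ∑ i, a ω i := by ring
    _ ≤ _ := mul_le_mul_of_nonneg_right ht hs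

lemma csvSym_moment {Ω : Type*} [MeasurableSpace Ω] {p : ℕ} (m : Measure Ω)
    (a : Ω → Fin p → ℝ) (ha : Measurable a)  (L : StrongDual ℝ (Fin p → ℝ)) (n : ℕ)
    (hi : Integrable (fun x => (L x) ^ n) (csvSym m a)) :
    ∫ x, (L x) ^ n ∂(csvSym m a) = ∫ ω, MvPolynomial.eval (a ω) (csvQ p L n) ∂m := by
  simp_rw [csvQ_eval]
  rw [csvSym] at hi ⊢
  rw [integrable_finsetSum_measure] at hi
  rw [integral_finsetSum_measure hi, integral_finsetSum]
  · refine Finset.sum_congr rfl fun π _ => ?_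
    rw [integral_map (csv_perm_meas a ha π).aemeasurable]
    exact Measurable.aestronglyMeasurable (by fun_prop)
  · intro π hπ
    have := hi π hπ
    rwa [integrable_map_measure (by fun_prop) (csv_perm_meas a ha π).aemeasurable] at this

lemma csv_determ {Ω Ω' : Type*} [MeasurableSpace Ω] [MeasurableSpace Ω'] {p : ℕ} (m : Measure Ω)
    (m' : Measure Ω') [IsFiniteMeasure m] [IsFiniteMeasure m']
    (a : Ω → Fin p → ℝ) (ha : Measurable a) (h0 : ∀ ω i, 0 ≤ a ω i)
    (a' : Ω' → Fin p → ℝ) (ha' : Measurable a') (h0' : ∀ ω i, 0 ≤ a' ω i)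
    (ε : ℝ) (hε : 0 < ε)
    (hi : Integrable (fun ω => Real.exp (ε * ∑ i, a ω i)) m)
    (hi' : Integrable (fun ω => Real.exp (ε * ∑ i, a' ω i)) m')
    (hm : ∀ Q : MvPolynomial (Fin p) ℝ, Q.IsSymmetric →
      ∫ ω, MvPolynomial.eval (a ω) Q ∂m = ∫ ω, MvPolynomial.eval (a' ω) Q ∂m') :
    csvSym m a = csvSym m' a' := by
  have f1 : IsFiniteMeasure (csvSym m a) := by rw [csvSym]; infer_instance
  have f2 : IsFiniteMeasure (csvSym m' a') := by rw [csvSym]; infer_instance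
  apply Measure.ext_of_charFunDual
  ext L
  rw [charFunDual_apply, charFunDual_apply]
  set δ := ε / (‖L‖ + 1) with hδ
  have hL : 0 < ‖L‖ + 1 := by positivity
  have hδ0 : 0 < δ := by positivity
  have hb : ∀ t : ℝ, |t| ≤ δ → |t| * ‖L‖ ≤ ε := by
    intro t ht
    calc |t| * ‖L‖ ≤ δ * (‖L‖ + 1) := by gcongr; linarith
      _ = ε := by rw [hδ]; field_simp
  have e1 := csvSym_int m a ha h0 ε hi L
  have e2 := csvSym_int m' a' ha' h0' ε hi' L
  have p1 := integrable_pow_of_integrable_exp_mul (X := fun x => L x) hδ0.ne'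
    (e1 δ (hb _ (abs_of_pos hδ0).le)) (e1 (-δ) (hb _ (by rw [abs_neg]; exact (abs_of_pos hδ0).le)))
  have p2 := integrable_pow_of_integrable_exp_mul (X := fun x => L x) hδ0.ne'
    (e2 δ (hb _ (abs_of_pos hδ0).le)) (e2 (-δ) (hb _ (by rw [abs_neg]; exact (abs_of_pos hδ0).le)))
  have key := csv_complexMGF_eq (csvSym m a) (csvSym m' a') (fun x => L x) (fun x => L x) δ hδ0
    (fun t ht => e1 t (hb t ht.le)) (fun t ht => e2 t (hb t ht.le)) (fun n => by
      rw [csvSym_moment m a ha L n (p1 n), csvSym_moment m' a' ha' L n (p2 n)]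
      exact hm _ (csvQ_symm p L n)) Complex.I (by simpa using hδ0)
  simp only [complexMGF] at key
  simpa only [mul_comm] using key

lemma csvSym_apply {Ω : Type*} [MeasurableSpace Ω] {p : ℕ} (m : Measure Ω)
    (a : Ω → Fin p → ℝ) (ha : Measurable a) (hanti : ∀ ω, Antitone (a ω)) (S : Set (Fin p → ℝ))
    (hS : MeasurableSet S) (hSC : S ⊆ csvC p) : csvSym m a S = m {ω | a ω ∈ S} := by
  rw [csvSym, Measure.finsetSum_apply, Finset.sum_eq_single 1]
  · rw [Measure.map_apply (csv_perm_meas a ha 1) hS]; rfl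
  · intro π _ hπ
    rw [Measure.map_apply (csv_perm_meas a ha π) hS]
    convert measure_empty (μ := m)
    rw [Set.eq_empty_iff_forall_notMem]
    intro ω hω
    have hω' : (fun i => a ω (π i)) ∈ csvC p := hSC hω
    apply hπ
    have hmono : StrictMono π := by
      intro i j hij
      by_contra h
      have h1 := hanti ω (not_lt.1 h)
      have h2 := hω'.1 i j hij
      simp only at h2
      exact absurd h1 (not_le.2 h2)
    have := (hmono.range_inj strictMono_id).1
      (by rw [π.surjective.range_eq, Set.range_id])
    ext i
    rw [this]; rfl
  · simp


lemma csv_eval_aeval {σ : Type*} (x : σ → ℝ) (T : ℕ → MvPolynomial σ ℝ) (f : MvPolynomial ℕ ℝ) :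
    MvPolynomial.eval x (MvPolynomial.aeval T f) =
      MvPolynomial.eval (fun j => MvPolynomial.eval x (T j)) f := by
  induction f using MvPolynomial.induction_on with
  | C a => simp
  | add f g hf hg => rw [map_add, map_add, hf, hg, map_add]
  | mul_X f j hf => rw [map_mul, map_mul, hf, map_mul, MvPolynomial.aeval_X, MvPolynomial.eval_X]

lemma csv_psum_eval {p : ℕ} (x : Fin p → ℝ) (f : MvPolynomial ℕ ℝ) :
    MvPolynomial.eval (fun i => x i ^ 2)
      (MvPolynomial.aeval (fun j => MvPolynomial.psum (Fin p) ℝ j) f) =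
    MvPolynomial.eval (fun j => ∑ i, x i ^ (2 * j)) f := by
  rw [csv_eval_aeval]
  congr 2
  ext j
  simp [MvPolynomial.psum, pow_mul]

lemma csv_W_pos {p : ℕ} (q : ℕ) (x : Fin p → ℝ) (hx : x ∈ csvC p) :
    0 < MvPolynomial.eval x (csvW p q) := by
  rw [csvW, map_mul, map_prod, map_prod]
  refine mul_pos (Finset.prod_pos fun i _ => ?_) (Finset.prod_pos fun i _ => ?_)
  · have := hx.2 i; simp; positivity
  · rw [map_prod]
    refine Finset.prod_pos fun j hj => ?_
    have h1 := hx.1 i j (Finset.mem_Ioi.1 hj)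
    have h2 := hx.2 j
    simp
    nlinarith

noncomputable def csvSq (p : ℕ) : (Fin p → ℝ) → (Fin p → ℝ) :=
  (csvC p).indicator (fun x i => x i ^ 2)

lemma csvSq_meas (p : ℕ) : Measurable (csvSq p) := by
  refine Measurable.indicator (by fun_prop) (csvC_open p).measurableSet

lemma csv_poly_cont {σ : Type*} (F : MvPolynomial σ ℝ) :
    Continuous (fun x : σ → ℝ => MvPolynomial.eval x F) := MvPolynomial.continuous_eval F

lemma csv_law (N p : ℕ) (hNp : p ≤ N) (v : NNReal) (hv : v ≠ 0)
    {Ω : Type*} [MeasurableSpace Ω] (P : Measure Ω) [IsProbabilityMeasure P]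
    (Z : Ω → Fin N × Fin p → ℝ) (hZ : Measurable Z) (d : Ω → Fin p → ℝ) (hd : Measurable d)
    (hanti : ∀ ω, Antitone (d ω)) (h0 : ∀ ω i, 0 ≤ d ω i)
    (hlaw : Measure.map Z P = Measure.pi fun _ => gaussianReal 0 v)
    (htr : ∀ ω j, MvPolynomial.eval (Z ω) ((csvG (Fin N) (Fin p) ^ j).trace) =
      ∑ i, d ω i ^ (2 * j)) (S : Set (Fin p → ℝ)) (hS : MeasurableSet S) (hSC : S ⊆ csvC p) :
    ENNReal.ofReal (∫ x in csvC p, MvPolynomial.eval x (csvW p (N - p))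
      ∂(Measure.pi fun _ => gaussianReal 0 v)) * P {ω | d ω ∈ S} =
    ∫⁻ x in S, ENNReal.ofReal (MvPolynomial.eval x (csvW p (N - p)))
      ∂(Measure.pi fun _ => gaussianReal 0 v) := by
  set W := csvW p (N - p) with hW
  set ν0 : Measure (Fin p → ℝ) := Measure.pi fun _ => gaussianReal 0 v with hν0
  set M := ∫ x in csvC p, MvPolynomial.eval x W ∂ν0 with hM
  have hCm : MeasurableSet (csvC p) := (csvC_open p).measurableSet
  have hM0 : 0 ≤ M := setIntegral_nonneg hCm fun x hx => (csv_W_pos _ x hx).le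
  have hWm : Measurable fun x : Fin p → ℝ => ENNReal.ofReal (MvPolynomial.eval x W) :=
    ENNReal.measurable_ofReal.comp (csv_poly_cont W).measurable
  set ν := (ν0.restrict (csvC p)).withDensity
    (fun x => ENNReal.ofReal (MvPolynomial.eval x W)) with hν
  have hWi : Integrable (fun x => MvPolynomial.eval x W) (ν0.restrict (csvC p)) :=
    (csv_integrable_mv v W).integrableOn
  have fν : IsFiniteMeasure ν := isFiniteMeasure_withDensity_ofReal hWi.2
  have fP : IsFiniteMeasure (ENNReal.ofReal M • P) := Measure.smul_finite P ENNReal.ofReal_ne_top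
  obtain ⟨ε1, he1, hi1⟩ := csv_exp_integrable (ι := Fin N × Fin p) v
  obtain ⟨ε2, he2, hi2⟩ := csv_exp_integrable (ι := Fin p) v
  set ε := min ε1 (ε2 / 2) with hε
  have hε0 : 0 < ε := by positivity
  have hdet := csv_determ (ENNReal.ofReal M • P) ν (fun ω i => d ω i ^ 2) (by fun_prop)
    (fun ω i => sq_nonneg _) (csvSq p) (csvSq_meas p) ?_ ε hε0 ?_ ?_ ?_
  rotate_left
  · intro x i
    rw [csvSq, Set.indicator]
    split_ifs
    · positivity
    · simp
  · refine Integrable.smul_measure ?_ ENNReal.ofReal_ne_top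
    rw [← hlaw, integrable_map_measure (Measurable.aestronglyMeasurable (by fun_prop)) hZ.aemeasurable] at hi1
    refine hi1.mono' (Measurable.aestronglyMeasurable (by fun_prop))
      (Filter.Eventually.of_forall fun ω => ?_)
    rw [Real.norm_eq_abs, Real.abs_exp, Function.comp, Real.exp_le_exp]
    have h1 := htr ω 1
    have h2 : MvPolynomial.eval (Z ω) ((csvG (Fin N) (Fin p) ^ 1).trace) = ∑ i, Z ω i ^ 2 := by
      rw [pow_one, Fintype.sum_prod_type, Finset.sum_comm, Matrix.trace, map_sum]
      simp [csvG, csvY, Matrix.mul_apply, pow_two]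
    rw [h2] at h1
    rw [h1]
    simp only [mul_one]
    exact mul_le_mul_of_nonneg_right (min_le_left _ _) (Finset.sum_nonneg fun i _ => sq_nonneg _)
  · rw [hν, integrable_withDensity_iff_integrable_smul' hWm (by simp)]
    have h1 := (csv_integrable_mv v (W ^ 2)).integrableOn (s := csvC p)
    refine (h1.add (hi2.integrableOn (s := csvC p))).mono' ?_ ?_
    · refine Measurable.aestronglyMeasurable ?_
      have := csvSq_meas p
      exact hWm.ennreal_toReal.smul (by fun_prop)
    · refine (ae_restrict_mem hCm).mono fun x hx => ?_
      have hw := (csv_W_pos (N - p) x hx).le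
      rw [ENNReal.toReal_ofReal hw, csvSq, Set.indicator_of_mem hx, smul_eq_mul,
        Real.norm_of_nonneg (by positivity)]
      simp only [Pi.add_apply, map_pow]
      have hs : 0 ≤ ∑ i, x i ^ 2 := Finset.sum_nonneg fun i _ => sq_nonneg _
      have h3 : Real.exp (ε * ∑ i, x i ^ 2) ^ 2 ≤ Real.exp (ε2 * ∑ i, x i ^ 2) := by
        rw [← Real.exp_nat_mul, Real.exp_le_exp]
        have : ε ≤ ε2 / 2 := min_le_right _ _
        push_cast
        nlinarith
      nlinarith [sq_nonneg (MvPolynomial.eval x W - Real.exp (ε * ∑ i, x i ^ 2)),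
        sq_nonneg (MvPolynomial.eval x W), sq_nonneg (Real.exp (ε * ∑ i, x i ^ 2))]
  · intro Q hQ
    obtain ⟨f, hf⟩ := csv_sym_psum p Q hQ
    have h1 := csv_moment N p hNp v hv f
    rw [integral_smul_measure, ENNReal.toReal_ofReal hM0, smul_eq_mul]
    rw [hν, integral_withDensity_eq_integral_toReal_smul hWm (by simp)]
    rw [← hlaw, integral_map hZ.aemeasurable (csv_poly_cont _).measurable.aestronglyMeasurable] at h1
    refine Eq.trans ?_ (h1.trans ?_)
    · congr 2
      ext ω
      rw [← hf, csv_psum_eval, csv_eval_aeval]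
      congr 2
      ext j
      rw [htr]
    · refine setIntegral_congr_fun hCm fun x hx => ?_
      rw [ENNReal.toReal_ofReal (csv_W_pos (N - p) x hx).le, csvSq, Set.indicator_of_mem hx, ← hf,
        csv_psum_eval, map_mul, csv_eval_aeval, smul_eq_mul, mul_comm]
      congr 3
      ext j
      simp [csvT]
  set S' : Set (Fin p → ℝ) := {y | (fun i => Real.sqrt (y i)) ∈ S ∧ ∀ i, 0 < y i} with hS'
  have hS'm : MeasurableSet S' := by
    have : S' = (fun (y : Fin p → ℝ) i => Real.sqrt (y i)) ⁻¹' S ∩ ⋂ i, {y | 0 < y i} := by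
      ext y; simp [hS']
    rw [this]
    refine MeasurableSet.inter ?_ (MeasurableSet.iInter fun i =>
      measurableSet_lt measurable_const (measurable_pi_apply i))
    exact (show Measurable (fun (y : Fin p → ℝ) i => Real.sqrt (y i)) by fun_prop) hS
  have hsq : ∀ x : Fin p → ℝ, (∀ i, 0 ≤ x i) → ((fun i => x i ^ 2) ∈ S' ↔ x ∈ S) := by
    intro x hx
    have e : (fun i => Real.sqrt (x i ^ 2)) = x := by
      ext i; exact Real.sqrt_sq (hx i)
    constructor
    · rintro ⟨h1, _⟩
      simp only at h1
      rwa [e] at h1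
    · intro h
      refine ⟨by simp only; rwa [e], fun i => ?_⟩
      have := (hSC h).2 i
      positivity
  have hS'C : S' ⊆ csvC p := by
    rintro y ⟨h1, h2⟩
    refine ⟨fun i j hij => ?_, h2⟩
    have := (hSC h1).1 i j hij
    exact (Real.sqrt_lt_sqrt_iff (h2 j).le).1 this
  have hap := congrArg (fun m : Measure (Fin p → ℝ) => m S') hdet
  rw [csvSym_apply _ _ (by fun_prop) ?_ S' hS'm hS'C, csvSym_apply _ _ (csvSq_meas p) ?_ S' hS'm hS'C] at hap
  rotate_left
  · intro x i j hij
    rw [csvSq]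
    by_cases hx : x ∈ csvC p
    · rw [Set.indicator_of_mem hx]
      rcases hij.eq_or_lt with rfl | h
      · rfl
      · have h1 := hx.1 i j h
        have h2 := hx.2 j
        nlinarith
    · rw [Set.indicator_of_notMem hx]; simp
  · intro ω i j hij
    exact pow_le_pow_left₀ (h0 ω j) (hanti ω hij) 2
  have e1 : {ω | (fun i => d ω i ^ 2) ∈ S'} = {ω | d ω ∈ S} := by
    ext ω; exact hsq _ (h0 ω)
  rw [e1, Measure.smul_apply, smul_eq_mul] at hap
  have e2 : {ω | csvSq p ω ∈ S'} = csvSq p ⁻¹' S' := rfl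
  rw [hap, e2, hν, withDensity_apply _ ((csvSq_meas p) hS'm), Measure.restrict_restrict ((csvSq_meas p) hS'm)]
  congr 2
  ext x
  constructor
  · rintro ⟨h1, h2⟩
    have h1 : csvSq p x ∈ S' := h1
    rw [csvSq, Set.indicator_of_mem h2] at h1
    exact (hsq x fun i => (h2.2 i).le).1 h1
  · intro h
    have h2 := hSC h
    refine ⟨?_, h2⟩
    change csvSq p x ∈ S'
    rw [csvSq, Set.indicator_of_mem h2]
    exact (hsq x fun i => (h2.2 i).le).2 h

lemma csv_trace (N p : ℕ) (y U : Fin N → Fin p → ℝ) (V : Fin p → Fin p → ℝ) (d : Fin p → ℝ)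
    (hSVD : Matrix.of y = Matrix.of U * Matrix.diagonal d * (Matrix.of V)ᵀ)
    (hU : (Matrix.of U)ᵀ * Matrix.of U = 1) (hV : (Matrix.of V)ᵀ * Matrix.of V = 1) (j : ℕ) :
    MvPolynomial.eval (fun x : Fin N × Fin p => y x.1 x.2) ((csvG (Fin N) (Fin p) ^ j).trace) =
      ∑ i, d i ^ (2 * j) := by
  have h1 : MvPolynomial.eval (fun x : Fin N × Fin p => y x.1 x.2) ((csvG (Fin N) (Fin p) ^ j).trace) =
    (((MvPolynomial.eval (fun x : Fin N × Fin p => y x.1 x.2)).mapMatrix (csvG (Fin N) (Fin p))) ^ j).trace := by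
    rw [← map_pow]
    simp [Matrix.trace]
  have h2 : (MvPolynomial.eval (fun x : Fin N × Fin p => y x.1 x.2)).mapMatrix (csvG (Fin N) (Fin p)) =
     (Matrix.of y)ᵀ * Matrix.of y := by
    ext a b
    simp [csvG, csvY, Matrix.mul_apply]
  have h3 : (Matrix.of y)ᵀ * Matrix.of y = Matrix.of V * Matrix.diagonal (fun i => d i ^ 2) * (Matrix.of V)ᵀ := by
    rw [hSVD]
    simp only [Matrix.transpose_mul, Matrix.transpose_transpose, Matrix.diagonal_transpose]
    calc _ = Matrix.of V * (Matrix.diagonal d * ((Matrix.of U)ᵀ * Matrix.of U) * Matrix.diagonal d) * (Matrix.of V)ᵀ := by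
          simp only [Matrix.mul_assoc]
      _ = _ := by
          rw [hU, Matrix.mul_one, Matrix.diagonal_mul_diagonal]
          simp only [pow_two]
  have h4 : ∀ j, (Matrix.of V * Matrix.diagonal (fun i => d i ^ 2) * (Matrix.of V)ᵀ) ^ j =
      Matrix.of V * Matrix.diagonal (fun i => d i ^ (2 * j)) * (Matrix.of V)ᵀ := by
    intro j
    induction j with
    | zero =>
      simp only [pow_zero, mul_zero, Matrix.diagonal_one, Matrix.mul_one]
      exact (mul_eq_one_comm.1 hV).symm
    | succ j ih =>
      rw [pow_succ, ih]
      calc _ = Matrix.of V * (Matrix.diagonal (fun i => d i ^ (2 * j)) * ((Matrix.of V)ᵀ * Matrix.of V) * Matrix.diagonal (fun i => d i ^ 2)) * (Matrix.of V)ᵀ := by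
            simp only [Matrix.mul_assoc]
        _ = _ := by
            rw [hV, Matrix.mul_one, Matrix.diagonal_mul_diagonal]
            simp only [mul_add, pow_add, mul_one]
  rw [h1, h2, h3, h4, Matrix.trace_mul_comm, ← Matrix.mul_assoc, hV, Matrix.one_mul, Matrix.trace_diagonal]


abbrev csvMask (p k : ℕ) : Matrix (Fin p) (Fin p) ℝ :=
  Matrix.diagonal (fun j : Fin p => if k ≤ (j : ℕ) then (1:ℝ) else 0)

/-- the good pairs -/
def csvOrth (n p : ℕ) : Set (Matrix (Fin n) (Fin p) ℝ) := {U | Uᵀ * U = 1}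

lemma csvOrth_compact (n p : ℕ) : IsCompact (csvOrth n p) := by
  have h1 : IsClosed (csvOrth n p) :=
    isClosed_eq (by fun_prop) continuous_const
  have h2 : IsCompact (Set.pi Set.univ fun _ : Fin n => Set.pi Set.univ fun _ : Fin p =>
      Set.Icc (-1 : ℝ) 1) :=
    isCompact_univ_pi fun _ => isCompact_univ_pi fun _ => isCompact_Icc
  refine h2.of_isClosed_subset h1 ?_
  suffices h : ∀ U : Matrix (Fin n) (Fin p) ℝ, U ∈ csvOrth n p → ∀ i j, U i j ∈ Set.Icc (-1 : ℝ) 1 from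
    fun U hU i _ j _ => h U hU i j
  intro U hU i j
  have h3 : (Uᵀ * U) j j = 1 := by rw [show Uᵀ * U = 1 from hU]; simp
  rw [Matrix.mul_apply] at h3
  simp only [Matrix.transpose_apply] at h3
  have h4 : U i j * U i j ≤ 1 := by
    rw [← h3]
    exact Finset.single_le_sum (f := fun x => U x j * U x j) (fun x _ => mul_self_nonneg _) (Finset.mem_univ i)
  rw [Set.mem_Icc]
  constructor <;> nlinarith

def csvRel (N p k : ℕ) (B : Matrix (Fin N) (Fin p) ℝ) :
    Set ((Matrix (Fin N) (Fin p) ℝ × Matrix (Fin p) (Fin p) ℝ) × Matrix (Fin N) (Fin p) ℝ) :=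
  {x | x.2 = x.1.1 * (x.1.1ᵀ * x.2 * x.1.2) * x.1.2ᵀ ∧
    (∀ i j, i ≠ j → (x.1.1ᵀ * x.2 * x.1.2) i j = 0) ∧
    (∀ i j, i ≤ j → (x.1.1ᵀ * x.2 * x.1.2) j j ≤ (x.1.1ᵀ * x.2 * x.1.2) i i) ∧
    (∀ i, 0 ≤ (x.1.1ᵀ * x.2 * x.1.2) i i) ∧
    (x.1.1 * csvMask p k * x.1.1ᵀ) * B * (x.1.2 * csvMask p k * x.1.2ᵀ) = 0}

lemma csvRel_closed (N p k : ℕ) (B : Matrix (Fin N) (Fin p) ℝ) : IsClosed (csvRel N p k B) := by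
  have hc : Continuous fun x : (Matrix (Fin N) (Fin p) ℝ × Matrix (Fin p) (Fin p) ℝ) ×
    Matrix (Fin N) (Fin p) ℝ => x.1.1ᵀ * x.2 * x.1.2 := by fun_prop
  have hij : ∀ i j, Continuous fun x : (Matrix (Fin N) (Fin p) ℝ × Matrix (Fin p) (Fin p) ℝ) ×
    Matrix (Fin N) (Fin p) ℝ => (x.1.1ᵀ * x.2 * x.1.2) i j := fun i j => hc.matrix_elem i j
  refine IsClosed.and (isClosed_eq (by fun_prop) (by fun_prop)) (IsClosed.and ?_ (IsClosed.and ?_ (IsClosed.and ?_ ?_)))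
  · simp only [Set.ofPred_forall]
    exact isClosed_iInter fun i => isClosed_iInter fun j => isClosed_iInter fun _ =>
      isClosed_eq (hij i j) continuous_const
  · simp only [Set.ofPred_forall]
    exact isClosed_iInter fun i => isClosed_iInter fun j => isClosed_iInter fun _ =>
      isClosed_le (hij _ _) (hij _ _)
  · simp only [Set.ofPred_forall]
    exact isClosed_iInter fun i => isClosed_le continuous_const (hij _ _)
  · exact isClosed_eq (by fun_prop) (by fun_prop)

lemma csvT_closed (N p k : ℕ) (B : Matrix (Fin N) (Fin p) ℝ) :
    IsClosed {y : Matrix (Fin N) (Fin p) ℝ | ∃ U ∈ csvOrth N p, ∃ V ∈ csvOrth p p, ((U, V), y) ∈ csvRel N p k B} := by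
  have hK : IsCompact (csvOrth N p ×ˢ csvOrth p p) := (csvOrth_compact N p).prod (csvOrth_compact p p)
  have : CompactSpace (csvOrth N p ×ˢ csvOrth p p : Set _) := isCompact_iff_compactSpace.1 hK
  have h1 : IsClosed {x : (csvOrth N p ×ˢ csvOrth p p : Set _) × Matrix (Fin N) (Fin p) ℝ |
      ((x.1 : Matrix (Fin N) (Fin p) ℝ × Matrix (Fin p) (Fin p) ℝ), x.2) ∈ csvRel N p k B} :=
    (csvRel_closed N p k B).preimage (by fun_prop)
  have h2 := isClosedMap_snd_of_compactSpace _ h1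
  convert! h2 using 1
  ext y
  constructor
  · rintro ⟨U, hU, V, hV, h⟩
    exact ⟨(⟨(U, V), hU, hV⟩, y), h, rfl⟩
  · rintro ⟨⟨⟨⟨U, V⟩, hU, hV⟩, y⟩, h, rfl⟩
    exact ⟨U, hU, V, hV, h⟩

lemma csv_B_entry (N p k : ℕ) (hNp : p < N) (hk : k + 1 < p) (B : Matrix (Fin N) (Fin p) ℝ)
    (h : ∀ y : Matrix (Fin N) (Fin p) ℝ, ∃ U ∈ csvOrth N p, ∃ V ∈ csvOrth p p, ((U, V), y) ∈ csvRel N p k B) :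
    B = 0 := by
  ext a b
  set τ : Fin p → Fin N := fun j => Equiv.swap (Fin.castLE hNp.le b) a (Fin.castLE hNp.le j) with hτ
  have hτb : τ b = a := by simp [hτ]
  have hτi : Function.Injective τ := (Equiv.injective _).comp (Fin.castLE_injective _)
  set c : Fin p → ℝ := fun j => if j = b then 1 else 2 with hc
  set y : Matrix (Fin N) (Fin p) ℝ := Matrix.of fun i j => if i = τ j then c j else 0 with hy
  obtain ⟨U, hU, V, hV, h1, h2, h3, h4, h5⟩ := h y
  have hU : Uᵀ * U = 1 := hU
  have hV : Vᵀ * V = 1 := hV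
  have hV' : V * Vᵀ = 1 := mul_eq_one_comm.1 hV
  simp only at h1 h2 h3 h4 h5
  set D := Uᵀ * y * V with hD
  have hDd : D = Matrix.diagonal fun i => D i i := by
    ext i j
    by_cases hij : i = j
    · subst hij; simp
    · rw [h2 i j hij, Matrix.diagonal_apply_ne _ hij]
  have hyy : yᵀ * y = Matrix.diagonal fun j => c j ^ 2 := by
    ext i j
    rw [Matrix.mul_apply]
    simp only [hy, Matrix.transpose_apply, Matrix.of_apply]
    by_cases hij : i = j
    · subst hij; simp [pow_two]
    · rw [Matrix.diagonal_apply_ne _ hij]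
      refine Finset.sum_eq_zero fun x _ => ?_
      by_cases hx : x = τ i
      · have : x ≠ τ j := fun hx' => hij (hτi (hx.symm.trans hx'))
        simp [this]
      · simp [hx]
  have hyV : y * V = U * D := by
    conv_lhs => rw [h1]
    rw [Matrix.mul_assoc, hV, Matrix.mul_one]
  have hDt : Dᵀ = D := by rw [hDd]; simp
  have hVD : (Matrix.diagonal fun j => c j ^ 2) * V = V * (D * D) := by
    rw [← hyy, Matrix.mul_assoc, hyV]
    conv_lhs => rw [h1]
    rw [Matrix.transpose_mul, Matrix.transpose_mul, Matrix.transpose_transpose, hDt]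
    calc _ = V * (D * (Uᵀ * U) * D) := by simp only [Matrix.mul_assoc]
      _ = _ := by rw [hU, Matrix.mul_one]
  have hent : ∀ j l, c j ^ 2 * V j l = V j l * D l l ^ 2 := by
    intro j l
    have := congrFun (congrFun hVD j) l
    rw [hDd, Matrix.diagonal_mul, Matrix.diagonal_mul_diagonal, Matrix.mul_diagonal] at this
    rw [this]; ring
  set L : Fin p := ⟨p - 1, by omega⟩ with hL
  have hLle : ∀ l : Fin p, l ≤ L := fun l => by rw [Fin.le_def]; simp [hL]; omega
  have hrow : ∃ l, V b l ≠ 0 := by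
    by_contra hcon
    push Not at hcon
    have := congrFun (congrFun hV' b) b
    rw [Matrix.mul_apply] at this
    simp [hcon] at this
  have hcol : ∃ j, V j L ≠ 0 := by
    by_contra hcon
    push Not at hcon
    have := congrFun (congrFun hV L) L
    rw [Matrix.mul_apply] at this
    simp [hcon] at this
  have hDL : D L L ≤ 1 := by
    obtain ⟨l, hl⟩ := hrow
    have e := hent b l
    have : D l l ^ 2 = 1 := by
      have hb : c b = 1 := by simp [hc]
      rw [hb] at e
      have : V b l * (D l l ^ 2 - 1) = 0 := by linarith
      rcases mul_eq_zero.1 this with h | h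
      · exact absurd h hl
      · linarith
    have h6 := h3 l L (hLle l)
    nlinarith [h4 l]
  have hne : ∀ j, j ≠ b → V j L = 0 := by
    intro j hj
    have e := hent j L
    have hcj : c j = 2 := by simp [hc, hj]
    rw [hcj] at e
    have : V j L * (4 - D L L ^ 2) = 0 := by linarith
    rcases mul_eq_zero.1 this with h | h
    · exact h
    · nlinarith [h4 L]
  have hbL : V b L ≠ 0 := by
    obtain ⟨j, hj⟩ := hcol
    by_cases hjb : j = b
    · rwa [hjb] at hj
    · exact absurd (hne j hjb) hj
  have hD1 : D L L = 1 := by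
    have e := hent b L
    have hb : c b = 1 := by simp [hc]
    rw [hb] at e
    have : V b L * (D L L ^ 2 - 1) = 0 := by linarith
    rcases mul_eq_zero.1 this with h | h
    · exact absurd h hbL
    · nlinarith [h4 L]
  have hUL : ∀ i, U i L = if i = a then V b L else 0 := by
    intro i
    have e := congrFun (congrFun hyV i) L
    rw [hDd, Matrix.mul_diagonal, hD1, mul_one, Matrix.mul_apply, Finset.sum_eq_single b] at e
    · rw [← e]
      simp only [hy, Matrix.of_apply, hτb]
      have hb : c b = 1 := by simp [hc]
      rw [hb]; split_ifs <;> simp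
    · intro j _ hj
      rw [hne j hj, mul_zero]
    · simp
  have h7 : csvMask p k * (Uᵀ * B * V) * csvMask p k = 0 := by
    calc _ = (Uᵀ * U) * csvMask p k * (Uᵀ * B * V) * csvMask p k * (Vᵀ * V) := by
          rw [hU, hV, Matrix.one_mul, Matrix.mul_one]
      _ = Uᵀ * ((U * csvMask p k * Uᵀ) * B * (V * csvMask p k * Vᵀ)) * V := by
          simp only [Matrix.mul_assoc]
      _ = 0 := by rw [h5]; simp
  have h8 := congrFun (congrFun h7 L) L
  have hkL : k ≤ (L : ℕ) := by simp [hL]; omega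
  rw [Matrix.mul_diagonal, Matrix.diagonal_mul, if_pos hkL, one_mul, mul_one, Matrix.mul_apply,
    Finset.sum_eq_single b, Matrix.mul_apply, Finset.sum_eq_single a] at h8
  · rw [Matrix.transpose_apply, hUL a, if_pos rfl] at h8
    simpa [hbL] using h8
  · intro i _ hi
    rw [Matrix.transpose_apply, hUL i, if_neg hi, zero_mul]
  · simp
  · intro j _ hj
    rw [hne j hj, mul_zero]
  · simp

lemma csv_B_zero (N p : ℕ) (hNp : p < N) (v : NNReal) (hv : v ≠ 0)
    (B : Matrix (Fin N) (Fin p) ℝ) (k : ℕ) (hk : k + 1 < p)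
    {Ω : Type} [MeasurableSpace Ω] (P : Measure Ω)
    (Y U : Ω → Fin N → Fin p → ℝ) (V : Ω → Fin p → Fin p → ℝ) (d : Ω → Fin p → ℝ)
    (hYm : Measurable Y)
    (hlaw : Measure.map Y P =
      Measure.pi (fun i : Fin N => Measure.pi (fun j : Fin p => gaussianReal (B i j) v)))
    (hSVD : ∀ ω, Matrix.of (Y ω) =
      Matrix.of (U ω) * Matrix.diagonal (d ω) * (Matrix.of (V ω))ᵀ)
    (hUorth : ∀ ω, (Matrix.of (U ω))ᵀ * Matrix.of (U ω) = 1)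
    (hVorth : ∀ ω, (Matrix.of (V ω))ᵀ * Matrix.of (V ω) = 1)
    (hanti : ∀ ω, Antitone (d ω))
    (hnonneg : ∀ ω i, 0 ≤ d ω i)
    (hnull : ∀ᵐ ω ∂P,
      (Matrix.of (U ω) * Matrix.diagonal (fun j : Fin p => if k ≤ (j : ℕ) then (1:ℝ) else 0) *
          (Matrix.of (U ω))ᵀ) * B *
        (Matrix.of (V ω) * Matrix.diagonal (fun j : Fin p => if k ≤ (j : ℕ) then (1:ℝ) else 0) *
          (Matrix.of (V ω))ᵀ) = 0) : B = 0 := by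
  apply csv_B_entry N p k hNp hk
  have hg : ∀ m, (gaussianReal m v).IsOpenPosMeasure := fun m =>
    (gaussianReal_absolutelyContinuous' m hv).isOpenPosMeasure
  set T : Set (Fin N → Fin p → ℝ) := {y : Matrix (Fin N) (Fin p) ℝ | ∃ U ∈ csvOrth N p, ∃ V ∈ csvOrth p p, ((U, V), y) ∈ csvRel N p k B} with hT
  have hTc : IsClosed T := csvT_closed N p k B
  have h0 : Measure.map Y P Tᶜ = 0 := by
    rw [Measure.map_apply hYm hTc.measurableSet.compl]
    change ∀ᵐ ω ∂P, Y ω ∈ T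
    filter_upwards [hnull] with ω hω
    refine ⟨Matrix.of (U ω), hUorth ω, Matrix.of (V ω), hVorth ω, ?_⟩
    have hD : (Matrix.of (U ω))ᵀ * Matrix.of (Y ω) * Matrix.of (V ω) = Matrix.diagonal (d ω) := by
      rw [hSVD]
      calc _ = ((Matrix.of (U ω))ᵀ * Matrix.of (U ω)) * Matrix.diagonal (d ω) *
              ((Matrix.of (V ω))ᵀ * Matrix.of (V ω)) := by simp only [Matrix.mul_assoc]
        _ = _ := by rw [hUorth, hVorth, Matrix.one_mul, Matrix.mul_one]
    change ((Matrix.of (U ω), Matrix.of (V ω)), Matrix.of (Y ω)) ∈ csvRel N p k B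
    rw [csvRel]
    refine ⟨?_, ?_, ?_, ?_, hω⟩
    · simp only; rw [hD]; exact hSVD ω
    · simp only; rw [hD]; exact fun i j hij => Matrix.diagonal_apply_ne _ hij
    · simp only; rw [hD]; intro i j hij; simpa using hanti ω hij
    · simp only; rw [hD]; intro i; simpa using hnonneg ω i
  rw [hlaw] at h0
  have hp1 : ∀ i, (Measure.pi fun j => gaussianReal (B i j) v).IsOpenPosMeasure := fun i => by
    have := fun j => hg (B i j)
    exact Measure.pi.isOpenPosMeasure _
  have hs : ∀ i, SigmaFinite (Measure.pi fun j => gaussianReal (B i j) v) := fun i =>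
    Measure.pi.sigmaFinite _
  have hp2 : (Measure.pi fun i => Measure.pi fun j => gaussianReal (B i j) v).IsOpenPosMeasure :=
    Measure.pi.isOpenPosMeasure _
  have h1 : Tᶜ = ∅ := (hTc.isOpen_compl.measure_eq_zero_iff _).1 h0
  intro y
  have : y ∈ T := by rw [Set.compl_empty_iff.1 h1]; trivial
  exact this

lemma csv_Z_law (N p : ℕ) (v : NNReal) {Ω : Type} [MeasurableSpace Ω] (P : Measure Ω)
    (Y : Ω → Fin N → Fin p → ℝ) (hYm : Measurable Y)
    (hlaw : Measure.map Y P =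
      Measure.pi (fun _ : Fin N => Measure.pi (fun _ : Fin p => gaussianReal 0 v))) :
    Measure.map (fun ω (x : Fin N × Fin p) => Y ω x.1 x.2) P = Measure.pi fun _ => gaussianReal 0 v := by
  have h := Measure.infinitePi_map_curry_symm (fun (_ : Fin N) (_ : Fin p) => gaussianReal 0 v)
  simp only [Measure.infinitePi_eq_pi] at h
  rw [← hlaw, Measure.map_map (MeasurableEquiv.measurable _) hYm] at h
  exact h


lemma csv_pit_prob (m : Measure ℝ) [IsProbabilityMeasure m] [NullSingletonClass m] :
    Measure.map (fun z => m.real (Set.Ioi z)) m = volume.restrict (Set.Ioo (0:ℝ) 1) := by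
  have hG : ∀ z, m.real (Set.Ioi z) = 1 - cdf m z := by
    intro z
    rw [cdf_eq_real, ← Set.compl_Iic, measureReal_compl measurableSet_Iic]
    simp
  have hGanti : Antitone fun z => m.real (Set.Ioi z) := by
    intro a b hab
    exact measureReal_mono (Set.Ioi_subset_Ioi hab)
  have hcont : Continuous (cdf m) := by
    rw [continuous_iff_continuousAt]
    intro x
    rw [(monotone_cdf m).continuousAt_iff_leftLim_eq_rightLim, StieltjesFunction.rightLim_eq]
    have h1 := (cdf m).measure_singleton x
    rw [measure_cdf, measure_singleton] at h1
    have h2 := ENNReal.ofReal_eq_zero.1 h1.symm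
    have h3 := (monotone_cdf m).leftLim_le (le_refl x)
    linarith
  have hivt : ∀ a, 0 < a → a < 1 → ∃ c, m.real (Set.Ioi c) = a := by
    intro a h0 h1
    have h2 : ∃ z, cdf m z ≤ 1 - a :=
      ((tendsto_cdf_atBot m).eventually_lt_const (by linarith : (0:ℝ) < 1 - a)).exists.imp fun _ h => h.le
    have h3 : ∃ z, 1 - a ≤ cdf m z :=
      ((tendsto_cdf_atTop m).eventually_const_lt (by linarith : 1 - a < (1:ℝ))).exists.imp fun _ h => h.le
    obtain ⟨c, hc⟩ := mem_range_of_exists_le_of_exists_ge hcont h2 h3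
    exact ⟨c, by rw [hG, hc]; ring⟩
  have hup : ∀ a, 0 < a → a < 1 → m {z | m.real (Set.Ioi z) < a} ≤ ENNReal.ofReal a := by
    intro a h0 h1
    obtain ⟨c, hc⟩ := hivt a h0 h1
    calc m {z | m.real (Set.Ioi z) < a} ≤ m (Set.Ioi c) := by
          refine measure_mono fun z hz => ?_
          by_contra hcon
          have := hGanti (not_lt.1 hcon)
          simp only [Set.mem_ofPred_eq] at hz
          simp only at this
          linarith
      _ = ENNReal.ofReal a := by rw [← hc, ofReal_measureReal]
  have hlow : ∀ a, 0 < a → a < 1 → ENNReal.ofReal a ≤ m {z | m.real (Set.Ioi z) ≤ a} := by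
    intro a h0 h1
    obtain ⟨c, hc⟩ := hivt a h0 h1
    calc ENNReal.ofReal a = m (Set.Ioi c) := by rw [← hc, ofReal_measureReal]
      _ ≤ _ := by
          refine measure_mono fun z hz => ?_
          have := hGanti (le_of_lt hz)
          simp only at this
          simp only [Set.mem_ofPred_eq]
          linarith
  have hup2 : ∀ a, 0 ≤ a → a < 1 → m {z | m.real (Set.Ioi z) ≤ a} ≤ ENNReal.ofReal a := by
    intro a h0 h1
    have ht : Filter.Tendsto ENNReal.ofReal (nhdsWithin a (Set.Ioi a)) (nhds (ENNReal.ofReal a)) :=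
      (ENNReal.continuous_ofReal.tendsto a).mono_left nhdsWithin_le_nhds
    refine ge_of_tendsto ht ?_
    filter_upwards [Ioo_mem_nhdsGT h1] with b hb
    exact (measure_mono fun z hz => lt_of_le_of_lt hz hb.1).trans (hup b (by linarith [hb.1]) hb.2)
  have hmeas : Measurable fun z => m.real (Set.Ioi z) := hGanti.measurable
  have : IsProbabilityMeasure (Measure.map (fun z => m.real (Set.Ioi z)) m) :=
    Measure.isProbabilityMeasure_map hmeas.aemeasurable
  refine Measure.ext_of_Iic _ _ fun a => ?_
  rw [Measure.map_apply hmeas measurableSet_Iic, Measure.restrict_apply measurableSet_Iic]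
  change m {z | m.real (Set.Ioi z) ≤ a} = _
  rcases lt_or_ge a 0 with ha | ha
  · have e1 : {z | m.real (Set.Ioi z) ≤ a} = ∅ := by
      ext z; simp only [Set.mem_ofPred_eq, Set.mem_empty_iff_false, iff_false, not_le]
      exact lt_of_lt_of_le ha measureReal_nonneg
    have e2 : Set.Iic a ∩ Set.Ioo 0 1 = ∅ := by
      ext z; simp only [Set.mem_inter_iff, Set.mem_Iic, Set.mem_Ioo, Set.mem_empty_iff_false, iff_false]
      rintro ⟨h1, h2, h3⟩; linarith
    rw [e1, e2]; simp
  rcases lt_or_ge a 1 with ha1 | ha1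
  · have e2 : Set.Iic a ∩ Set.Ioo 0 1 = Set.Ioc 0 a := by
      ext z; simp only [Set.mem_inter_iff, Set.mem_Iic, Set.mem_Ioo, Set.mem_Ioc]
      constructor
      · rintro ⟨h1, h2, h3⟩; exact ⟨h2, h1⟩
      · rintro ⟨h1, h2⟩; exact ⟨h2, h1, by linarith⟩
    rw [e2, Real.volume_Ioc, sub_zero]
    refine le_antisymm (hup2 a ha ha1) ?_
    rcases ha.eq_or_lt with h | h
    · rw [← h]; simp
    · exact hlow a h ha1
  · have e1 : {z | m.real (Set.Ioi z) ≤ a} = Set.univ := by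
      ext z; simp only [Set.mem_ofPred_eq, Set.mem_univ, iff_true]
      exact measureReal_le_one.trans ha1
    have e2 : Set.Iic a ∩ Set.Ioo 0 1 = Set.Ioo 0 1 := by
      rw [Set.inter_eq_right]
      intro z hz; exact hz.2.le.trans ha1
    rw [e1, e2]; simp

lemma csv_pit (h : ℝ → ℝ) (hm : Measurable h) (I : Set ℝ) (hI : MeasurableSet I)
    (hpos : ∀ z ∈ I, 0 < h z) (hintg : IntegrableOn h I) (hvol : volume I ≠ 0)
    (A : Set ℝ) (hA : MeasurableSet A) :
    ∫⁻ z in I, ENNReal.ofReal (h z) * A.indicator 1 ((∫ t in I ∩ Set.Ioi z, h t) / ∫ t in I, h t) =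
      volume (A ∩ Set.Ioo 0 1) * ∫⁻ z in I, ENNReal.ofReal (h z) := by
  set m : Measure ℝ := (volume.restrict I).withDensity fun z => ENNReal.ofReal (h z) with hmdef
  have hmI : m Set.univ = ∫⁻ z in I, ENNReal.ofReal (h z) := by
    rw [hmdef, withDensity_apply _ MeasurableSet.univ, Measure.restrict_univ]
  have hintg' : ∫⁻ z in I, ENNReal.ofReal (h z) = ENNReal.ofReal (∫ t in I, h t) :=
    (ofReal_integral_eq_lintegral_ofReal hintg
      ((ae_restrict_iff' hI).2 (Filter.Eventually.of_forall fun z hz => (hpos z hz).le))).symm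
  have hIpos : 0 < ∫ t in I, h t := by
    rw [setIntegral_pos_iff_support_of_nonneg_ae
      ((ae_restrict_iff' hI).2 (Filter.Eventually.of_forall fun z hz => (hpos z hz).le)) hintg]
    refine lt_of_lt_of_le (pos_iff_ne_zero.2 hvol) (measure_mono fun z hz => ⟨(hpos z hz).ne', hz⟩)
  have htail : ∀ z, m (Set.Ioi z) = ENNReal.ofReal (∫ t in I ∩ Set.Ioi z, h t) := by
    intro z
    rw [hmdef, withDensity_apply _ measurableSet_Ioi, Measure.restrict_restrict measurableSet_Ioi,
      Set.inter_comm]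
    exact (ofReal_integral_eq_lintegral_ofReal (hintg.mono_set Set.inter_subset_left)
      ((ae_restrict_iff' (hI.inter measurableSet_Ioi)).2 (Filter.Eventually.of_forall
        fun z hz => (hpos z hz.1).le))).symm
  have hnn : ∀ z, 0 ≤ ∫ t in I ∩ Set.Ioi z, h t := fun z =>
    setIntegral_nonneg (hI.inter measurableSet_Ioi) fun t ht => (hpos t ht.1).le
  have hm0 : m Set.univ ≠ 0 := by
    rw [hmI, hintg']; simpa using hIpos
  have hmt : m Set.univ ≠ ⊤ := by
    rw [hmI, hintg']; simp
  set m' : Measure ℝ := (m Set.univ)⁻¹ • m with hm'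
  have : IsProbabilityMeasure m' := ⟨by
    rw [hm', Measure.smul_apply, smul_eq_mul, ENNReal.inv_mul_cancel hm0 hmt]⟩
  have : NullSingletonClass m := by rw [hmdef]; infer_instance
  have : NullSingletonClass m' := ⟨fun x => by rw [hm', Measure.smul_apply, measure_singleton]; simp⟩
  have hS : ∀ z, m'.real (Set.Ioi z) = (∫ t in I ∩ Set.Ioi z, h t) / ∫ t in I, h t := by
    intro z
    rw [measureReal_def, hm', Measure.smul_apply, smul_eq_mul, htail, hmI, hintg', ENNReal.toReal_mul,
      ENNReal.toReal_inv, ENNReal.toReal_ofReal hIpos.le, ENNReal.toReal_ofReal (hnn z)]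
    field_simp
  have hpit := csv_pit_prob m'
  simp only [hS] at hpit
  have hmeas : Measurable fun z => (∫ t in I ∩ Set.Ioi z, h t) / ∫ t in I, h t := by
    simp only [← hS]
    exact Antitone.measurable fun a b hab => measureReal_mono (Set.Ioi_subset_Ioi hab)
  have h1 := congrArg (fun μ => μ A) hpit
  rw [Measure.map_apply hmeas hA, Measure.restrict_apply hA] at h1
  rw [← h1, hm', Measure.smul_apply, smul_eq_mul, ← hmI, mul_comm, ← mul_assoc,
    ENNReal.mul_inv_cancel hm0 hmt, one_mul, hmdef, withDensity_apply _ (hmeas hA),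
    ← lintegral_indicator (hmeas hA)]
  refine lintegral_congr fun z => ?_
  by_cases hz : (∫ t in I ∩ Set.Ioi z, h t) / ∫ t in I, h t ∈ A
  · rw [Set.indicator_of_mem hz, Set.indicator_of_mem (show z ∈ (fun z => (∫ t in I ∩ Set.Ioi z, h t) / ∫ t in I, h t) ⁻¹' A from hz)]; simp
  · rw [Set.indicator_of_notMem hz, Set.indicator_of_notMem (show z ∉ (fun z => (∫ t in I ∩ Set.Ioi z, h t) / ∫ t in I, h t) ⁻¹' A from hz)]; simp


/-- the one-dimensional conditional density (unnormalised) -/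
noncomputable def csvh {p : ℕ} (σ : ℝ) (q : ℕ) (K : Fin p) (x : Fin p → ℝ) (z : ℝ) : ℝ :=
  Real.exp (-(z ^ 2) / (2 * σ ^ 2)) * z ^ q * ∏ j ∈ Finset.univ.erase K, |z ^ 2 - x j ^ 2|

/-- the tail integrals -/
noncomputable def csvI {p : ℕ} (σ : ℝ) (q : ℕ) (K L : Fin p) (x : Fin p → ℝ) : ℝ :=
  ∫ z in {z : ℝ | x L < z ∧ ∀ j : Fin p, (j : ℕ) < (K : ℕ) → z < x j}, csvh σ q K x z

lemma csvh_cont {p : ℕ} (σ : ℝ) (q : ℕ) (K : Fin p) :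
    Continuous fun x : (Fin p → ℝ) × ℝ => csvh σ q K x.1 x.2 := by
  unfold csvh
  fun_prop

lemma csvI_meas {p : ℕ} (σ : ℝ) (q : ℕ) (K L : Fin p) : Measurable (csvI σ q K L) := by
  set s : Set ((Fin p → ℝ) × ℝ) := {x | x.1 L < x.2 ∧ ∀ j : Fin p, (j : ℕ) < (K : ℕ) → x.2 < x.1 j} with hs
  have hsm : MeasurableSet s := by
    have : s = {x | x.1 L < x.2} ∩ ⋂ j : Fin p, ⋂ (_ : (j : ℕ) < (K : ℕ)), {x | x.2 < x.1 j} := by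
      ext x; simp [hs]
    rw [this]
    refine (measurableSet_lt (by fun_prop) (by fun_prop)).inter
      (MeasurableSet.iInter fun j => MeasurableSet.iInter fun _ => measurableSet_lt (by fun_prop) (by fun_prop))
  have h1 : Measurable (s.indicator fun x : (Fin p → ℝ) × ℝ => csvh σ q K x.1 x.2) :=
    (csvh_cont σ q K).measurable.indicator hsm
  have h2 := h1.stronglyMeasurable.integral_prod_right' (ν := (volume : Measure ℝ))
  convert! h2.measurable using 1
  ext x
  rw [csvI, ← integral_indicator]
  · rfl
  · exact hsm.preimage (by fun_prop : Measurable fun z : ℝ => (x, z))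

lemma csv_prod_split {p : ℕ} (K : Fin p) (f : Fin p → Fin p → ℝ) (hf : ∀ i j, f i j = f j i) :
    ∏ i, ∏ j ∈ Finset.Ioi i, f i j = (∏ j ∈ Finset.univ.erase K, f K j) *
      ∏ i ∈ Finset.univ.erase K, ∏ j ∈ Finset.univ.erase K, if i < j then f i j else 1 := by
  have h1 : ∀ i, ∏ j ∈ Finset.Ioi i, f i j = ∏ j, if i < j then f i j else 1 := by
    intro i
    rw [← Finset.prod_filter]
    congr 1
    ext j; simp
  simp only [h1]
  rw [← Finset.mul_prod_erase Finset.univ _ (Finset.mem_univ K)]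
  rw [← Finset.mul_prod_erase Finset.univ _ (Finset.mem_univ K), if_neg (lt_irrefl K), one_mul]
  have h2 : ∀ i, (∏ j, if i < j then f i j else 1) = (if i < K then f i K else 1) *
      ∏ j ∈ Finset.univ.erase K, if i < j then f i j else 1 := fun i =>
    (Finset.mul_prod_erase Finset.univ _ (Finset.mem_univ K)).symm
  simp only [h2]
  rw [Finset.prod_mul_distrib, ← mul_assoc, ← Finset.prod_mul_distrib]
  congr 1
  refine Finset.prod_congr rfl fun j hj => ?_
  have hj : j ≠ K := Finset.ne_of_mem_erase hj
  rcases lt_or_gt_of_ne hj with h | h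
  · rw [if_neg (not_lt.2 h.le), if_pos h, one_mul, hf]
  · rw [if_pos h, if_neg (not_lt.2 h.le), mul_one]

lemma csv_W_factor {p : ℕ} (q : ℕ) (K : Fin p) (x : Fin p → ℝ) :
    ∃ c : ℝ, 0 ≤ c ∧ ∀ z, Function.update x K z ∈ csvC p →
      MvPolynomial.eval (Function.update x K z) (csvW p q) =
        c * (z ^ q * ∏ j ∈ Finset.univ.erase K, |z ^ 2 - x j ^ 2|) := by
  refine ⟨|∏ i ∈ Finset.univ.erase K, x i ^ q| * ∏ i ∈ Finset.univ.erase K, ∏ j ∈ Finset.univ.erase K,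
    if i < j then |x i ^ 2 - x j ^ 2| else 1, ?_, ?_⟩
  · refine mul_nonneg (abs_nonneg _) (Finset.prod_nonneg fun i _ => Finset.prod_nonneg fun j _ => ?_)
    split_ifs
    · exact abs_nonneg _
    · exact zero_le_one
  · intro z hz
    have hz0 : 0 < z := by simpa using hz.2 K
    rw [← abs_of_pos (csv_W_pos q _ hz), csvW]
    simp only [map_mul, map_prod, map_pow, map_sub, MvPolynomial.eval_X]
    rw [abs_mul, Finset.abs_prod Finset.univ fun i => ∏ j ∈ Finset.Ioi i, _]
    simp only [Finset.abs_prod _ fun j => (_ : ℝ) - _]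
    rw [csv_prod_split K (fun i j => |Function.update x K z i ^ 2 - Function.update x K z j ^ 2|)
      (fun i j => abs_sub_comm _ _)]
    rw [← Finset.mul_prod_erase Finset.univ _ (Finset.mem_univ K)]
    have e : ∀ j ∈ Finset.univ.erase K, Function.update x K z j = x j := fun j hj =>
      Function.update_of_ne (Finset.ne_of_mem_erase hj) _ _
    have e1 : ∏ i ∈ Finset.univ.erase K, Function.update x K z i ^ q = ∏ i ∈ Finset.univ.erase K, x i ^ q :=
      Finset.prod_congr rfl fun j hj => by rw [e j hj]
    have e2 : ∏ j ∈ Finset.univ.erase K, |Function.update x K z K ^ 2 - Function.update x K z j ^ 2| =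
        ∏ j ∈ Finset.univ.erase K, |z ^ 2 - x j ^ 2| :=
      Finset.prod_congr rfl fun j hj => by rw [e j hj, Function.update_self]
    have e3 : (∏ i ∈ Finset.univ.erase K, ∏ j ∈ Finset.univ.erase K,
          if i < j then |Function.update x K z i ^ 2 - Function.update x K z j ^ 2| else 1) =
        ∏ i ∈ Finset.univ.erase K, ∏ j ∈ Finset.univ.erase K,
          if i < j then |x i ^ 2 - x j ^ 2| else 1 :=
      Finset.prod_congr rfl fun i hi => Finset.prod_congr rfl fun j hj => by rw [e j hj, e i hi]
    rw [e1, e2, e3, Function.update_self, abs_mul, abs_of_pos (pow_pos hz0 q)]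
    ring

lemma csvh_int {p : ℕ} (σ : ℝ) (hσ : 0 < σ) (q : ℕ) (K : Fin p) (x : Fin p → ℝ) :
    Integrable (csvh σ q K x) := by
  set v : NNReal := ⟨σ ^ 2, sq_nonneg σ⟩ with hv
  have hv0 : v ≠ 0 := by
    intro h
    have : (v : ℝ) = 0 := by rw [h]; rfl
    have h2 : (v : ℝ) = σ ^ 2 := rfl
    have : 0 < σ ^ 2 := by positivity
    linarith
  set Q : Polynomial ℝ := Polynomial.X ^ q * ∏ j ∈ Finset.univ.erase K,
    (Polynomial.X ^ 2 - Polynomial.C (x j ^ 2)) with hQ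
  have h1 := (csv_integrable_vol v hv0 _ (csv_integrable_poly1 v Q)).norm
  have h2 := h1.const_mul (Real.sqrt (2 * Real.pi * v))
  refine h2.mono' ?_ (Filter.Eventually.of_forall fun z => ?_)
  · exact ((csvh_cont σ q K).comp (Continuous.prodMk_right x)).aestronglyMeasurable
  · have hs : 0 < Real.sqrt (2 * Real.pi * v) := by
      apply Real.sqrt_pos.2
      have : 0 < (v : ℝ) := by positivity
      positivity
    apply le_of_eq
    rw [csvh, hQ, gaussianPDFReal]
    simp only [norm_mul, Polynomial.eval_mul, Polynomial.eval_pow, Polynomial.eval_X,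
      Polynomial.eval_prod, Polynomial.eval_sub, Polynomial.eval_C, norm_prod, Real.norm_eq_abs, abs_abs,
      norm_inv, abs_of_pos hs, sub_zero]
    have : (v : ℝ) = σ ^ 2 := rfl
    rw [this] at *
    field_simp

lemma csv_slice_int {p : ℕ} (σ : ℝ) (hσ : 0 < σ) (q : ℕ) (K L : Fin p) (hKL : (L : ℕ) = K + 1)
    (x : Fin p → ℝ) (hx : x ∈ csvC p) (A : Set ℝ) (hA : MeasurableSet A)
    (v : NNReal) (hv : v = ⟨σ ^ 2, sq_nonneg σ⟩) (W : (Fin p → ℝ) → ENNReal)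
    (hW : W = fun x => ENNReal.ofReal (MvPolynomial.eval x (csvW p q))) :
    ∫⁻ z, (csvC p ∩ (fun x => csvI σ q K K x / csvI σ q K L x) ⁻¹' A).indicator W (Function.update x K z)
      ∂(gaussianReal 0 v) = volume (A ∩ Set.Ioo 0 1) *
    ∫⁻ z, (csvC p).indicator W (Function.update x K z) ∂(gaussianReal 0 v) := by
  have hv0 : v ≠ 0 := by
    intro h
    have : (v : ℝ) = 0 := by rw [h]; rfl
    have h2 : (v : ℝ) = σ ^ 2 := by rw [hv]; rfl
    have : 0 < σ ^ 2 := by positivity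
    linarith
  have hσv : (v : ℝ) = σ ^ 2 := by rw [hv]; rfl
  obtain ⟨c, hc, hfac⟩ := csv_W_factor q K x
  have hne : ∀ j : Fin p, j ≠ K → ∀ z, Function.update x K z j = x j := fun j hj z =>
    Function.update_of_ne hj _ _
  have hLK : L ≠ K := by intro h; rw [h] at hKL; omega
  set I : Set ℝ := {z | x L < z ∧ ∀ j : Fin p, (j : ℕ) < (K : ℕ) → z < x j} with hI
  have hlo : csvlo x K = x L := by
    have hl : (K : ℕ) + 1 < p := by rw [← hKL]; exact L.2
    rw [csvlo, dif_pos hl]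
    congr 1
    exact Fin.ext hKL.symm
  have hmem : ∀ z, Function.update x K z ∈ csvC p ↔ z ∈ I := by
    intro z
    rw [csv_slice x hx K z, hlo]
    rfl
  have hIo : IsOpen I := by
    have : I = (fun z => Function.update x K z) ⁻¹' csvC p := by
      ext z; exact (hmem z).symm
    rw [this]
    exact (csvC_open p).preimage (continuous_const.update K continuous_id)
  have hxI : x K ∈ I := by rw [← hmem, Function.update_eq_self]; exact hx
  have hpos : ∀ z ∈ I, 0 < csvh σ q K x z := by
    intro z hz
    have hzC := (hmem z).2 hz
    have h1 := csv_W_pos q _ hzC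
    rw [hfac z hzC] at h1
    rw [csvh, mul_assoc]
    refine mul_pos (Real.exp_pos _) ?_
    by_contra hcon
    exact absurd h1 (not_lt.2 (mul_nonpos_of_nonneg_of_nonpos hc (not_lt.1 hcon)))
  have hpit := csv_pit (csvh σ q K x) (((csvh_cont σ q K).comp (Continuous.prodMk_right x)).measurable) I
    hIo.measurableSet hpos (csvh_int σ hσ q K x).integrableOn (hIo.measure_pos _ ⟨_, hxI⟩).ne' A hA
  have hhu : ∀ z, csvh σ q K (Function.update x K z) = csvh σ q K x := by
    intro z
    ext t
    rw [csvh, csvh]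
    congr 1
    exact Finset.prod_congr rfl fun j hj => by rw [hne j (Finset.ne_of_mem_erase hj)]
  have hIL : ∀ z, csvI σ q K L (Function.update x K z) = ∫ t in I, csvh σ q K x t := by
    intro z
    rw [csvI, hhu]
    congr 2
    ext t
    simp only [hI, hne L hLK, Set.mem_ofPred_eq]
    refine and_congr Iff.rfl (forall_congr' fun j => imp_congr_right fun hj => ?_)
    rw [hne j (by rintro rfl; omega)]
  have hIK : ∀ z ∈ I, csvI σ q K K (Function.update x K z) = ∫ t in I ∩ Set.Ioi z, csvh σ q K x t := by
    intro z hz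
    rw [csvI, hhu]
    congr 2
    ext t
    simp only [hI, Function.update_self, Set.mem_ofPred_eq, Set.mem_inter_iff, Set.mem_Ioi]
    constructor
    · rintro ⟨h1, h2⟩
      refine ⟨⟨hz.1.trans h1, fun j hj => ?_⟩, h1⟩
      have := h2 j hj
      rwa [hne j (by rintro rfl; omega)] at this
    · rintro ⟨⟨h1, h2⟩, h3⟩
      refine ⟨h3, fun j hj => ?_⟩
      rw [hne j (by rintro rfl; omega)]
      exact h2 j hj
  set c0 : ENNReal := ENNReal.ofReal ((Real.sqrt (2 * Real.pi * v))⁻¹ * c) with hc0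
  have hupd : Measurable fun z : ℝ => Function.update x K z :=
    (continuous_const.update K continuous_id).measurable
  have hWm : Measurable W := by
    rw [hW]; exact ENNReal.measurable_ofReal.comp (csv_poly_cont _).measurable
  have hdens : ∀ z ∈ I, gaussianPDF 0 v z * W (Function.update x K z) = c0 * ENNReal.ofReal (csvh σ q K x z) := by
    intro z hz
    rw [hW, hc0, gaussianPDF]
    simp only
    rw [← ENNReal.ofReal_mul (gaussianPDFReal_nonneg _ _ _), ← ENNReal.ofReal_mul (by positivity),
      hfac z ((hmem z).2 hz), gaussianPDFReal, csvh, hσv, sub_zero]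
    congr 1
    ring
  have hSm : Measurable fun x : Fin p → ℝ => csvI σ q K K x / csvI σ q K L x :=
    (csvI_meas σ q K K).div (csvI_meas σ q K L)
  have hCm : MeasurableSet (csvC p) := (csvC_open p).measurableSet
  have key : ∀ T : Set (Fin p → ℝ), MeasurableSet T → ∀ g : ℝ → ENNReal,
      (∀ z, (csvC p ∩ T).indicator W (Function.update x K z) = I.indicator (fun z => W (Function.update x K z) * g z) z) →
      ∫⁻ z, (csvC p ∩ T).indicator W (Function.update x K z) ∂(gaussianReal 0 v) =
        c0 * ∫⁻ z in I, ENNReal.ofReal (csvh σ q K x z) * g z := by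
    intro T hT g hg
    rw [gaussianReal_of_var_ne_zero _ hv0, lintegral_withDensity_eq_lintegral_mul _ (measurable_gaussianPDF _ _)
      (show Measurable fun z => (csvC p ∩ T).indicator W (Function.update x K z) from
        (hWm.indicator (hCm.inter hT)).comp hupd), ← lintegral_const_mul' _ _ ENNReal.ofReal_ne_top,
      ← lintegral_indicator hIo.measurableSet]
    refine lintegral_congr fun z => ?_
    simp only [Pi.mul_apply]
    rw [hg z]
    by_cases hz : z ∈ I
    · rw [Set.indicator_of_mem hz, Set.indicator_of_mem hz, ← mul_assoc, ← mul_assoc, hdens z hz]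
    · rw [Set.indicator_of_notMem hz, Set.indicator_of_notMem hz, mul_zero]
  have k1 := key Set.univ MeasurableSet.univ (fun _ => 1) (fun z => by
    rw [Set.inter_univ]
    by_cases hz : z ∈ I
    · rw [Set.indicator_of_mem hz, Set.indicator_of_mem ((hmem z).2 hz), mul_one]
    · rw [Set.indicator_of_notMem hz, Set.indicator_of_notMem (fun h => hz ((hmem z).1 h))])
  have k2 := key _ (hSm hA) (fun z => A.indicator 1 ((∫ t in I ∩ Set.Ioi z, csvh σ q K x t) / ∫ t in I, csvh σ q K x t))
   (fun z => by
    by_cases hz : z ∈ I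
    · rw [Set.indicator_of_mem hz, ← hIK z hz, ← hIL z]
      by_cases hzA : csvI σ q K K (Function.update x K z) / csvI σ q K L (Function.update x K z) ∈ A
      · rw [Set.indicator_of_mem hzA, Set.indicator_of_mem (show Function.update x K z ∈ csvC p ∩
          (fun x => csvI σ q K K x / csvI σ q K L x) ⁻¹' A from ⟨(hmem z).2 hz, hzA⟩)]; simp
      · rw [Set.indicator_of_notMem hzA, Set.indicator_of_notMem (fun h => hzA h.2), mul_zero]
    · rw [Set.indicator_of_notMem hz, Set.indicator_of_notMem (fun h => hz ((hmem z).1 h.1))])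
  rw [Set.inter_univ] at k1
  simp only [mul_one] at k1
  rw [k1, k2, hpit]
  ring


lemma csv_fubini {p : ℕ} (σ : ℝ) (hσ : 0 < σ) (q : ℕ) (K L : Fin p) (hKL : (L : ℕ) = K + 1)
    (A : Set ℝ) (hA : MeasurableSet A)
    (v : NNReal) (hv : v = ⟨σ ^ 2, sq_nonneg σ⟩) :
    ∫⁻ x in csvC p ∩ (fun x => csvI σ q K K x / csvI σ q K L x) ⁻¹' A,
      ENNReal.ofReal (MvPolynomial.eval x (csvW p q)) ∂(Measure.pi fun _ => gaussianReal 0 v) =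
    volume (A ∩ Set.Ioo 0 1) * ∫⁻ x in csvC p,
      ENNReal.ofReal (MvPolynomial.eval x (csvW p q)) ∂(Measure.pi fun _ => gaussianReal 0 v) := by
  obtain ⟨n, rfl⟩ : ∃ n, p = n + 1 := ⟨p - 1, by have := K.2; omega⟩
  set W : (Fin (n+1) → ℝ) → ENNReal := fun x => ENNReal.ofReal (MvPolynomial.eval x (csvW (n+1) q)) with hW
  have hSm : Measurable fun x : Fin (n+1) → ℝ => csvI σ q K K x / csvI σ q K L x :=
    (csvI_meas σ q K K).div (csvI_meas σ q K L)
  have hCm : MeasurableSet (csvC (n+1)) := (csvC_open _).measurableSet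
  have hWm : Measurable W := ENNReal.measurable_ofReal.comp (csv_poly_cont _).measurable
  have mp := (measurePreserving_piFinSuccAbove (fun _ : Fin (n+1) => gaussianReal 0 v) K).symm
  have fub : ∀ F : (Fin (n+1) → ℝ) → ENNReal, Measurable F →
      ∫⁻ x, F x ∂(Measure.pi fun _ => gaussianReal 0 v) =
      ∫⁻ y : Fin n → ℝ, ∫⁻ z, F (K.insertNth z y) ∂(gaussianReal 0 v) ∂(Measure.pi fun _ => gaussianReal 0 v) := by
    intro F hF
    rw [← mp.lintegral_comp hF]
    exact lintegral_prod_symm _ (hF.comp (MeasurableEquiv.measurable _)).aemeasurable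
  rw [← lintegral_indicator (hCm.inter (hSm hA)), ← lintegral_indicator hCm,
    fub _ (hWm.indicator (hCm.inter (hSm hA))), fub _ (hWm.indicator hCm), ← lintegral_const_mul']
  · refine lintegral_congr fun y => ?_
    by_cases h : ∃ z0, (K.insertNth z0 y : Fin (n+1) → ℝ) ∈ csvC (n+1)
    · obtain ⟨z0, hz0⟩ := h
      have := csv_slice_int σ hσ q K L hKL _ hz0 A hA v hv W hW
      simp only [← csv_insertNth_update K _ z0 y] at this
      exact this
    · push Not at h
      have e1 : ∀ z, (csvC (n+1) ∩ (fun x => csvI σ q K K x / csvI σ q K L x) ⁻¹' A).indicator W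
        (K.insertNth z y) = 0 := fun z => Set.indicator_of_notMem (fun h' => h z h'.1) _
      have e2 : ∀ z, (csvC (n+1)).indicator W (K.insertNth z y) = 0 := fun z => Set.indicator_of_notMem (h z) _
      simp only [e1, e2]
      simp
  · refine ne_top_of_le_ne_top ?_ (measure_mono Set.inter_subset_right)
    simp

lemma csv_final (N p : ℕ) (hNp : p < N) (σ : ℝ) (hσ : 0 < σ) (K L : Fin p) (hKL : (L : ℕ) = K + 1)
    {Ω : Type} [MeasurableSpace Ω] (P : Measure Ω) [IsProbabilityMeasure P]
    (v : NNReal) (hv : v = ⟨σ ^ 2, sq_nonneg σ⟩)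
    (Z : Ω → Fin N × Fin p → ℝ) (hZ : Measurable Z) (d : Ω → Fin p → ℝ) (hd : Measurable d)
    (hanti : ∀ ω, Antitone (d ω)) (h0 : ∀ ω i, 0 ≤ d ω i)
    (hlaw : Measure.map Z P = Measure.pi fun _ => gaussianReal 0 v)
    (htr : ∀ ω j, MvPolynomial.eval (Z ω) ((csvG (Fin N) (Fin p) ^ j).trace) =
      ∑ i, d ω i ^ (2 * j)) :
    Measure.map (fun ω => csvI σ (N - p) K K (d ω) / csvI σ (N - p) K L (d ω)) P =
      volume.restrict (Set.Ioo (0 : ℝ) 1) := by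
  have hv0 : v ≠ 0 := by
    intro h
    have : (v : ℝ) = 0 := by rw [h]; rfl
    have h2 : (v : ℝ) = σ ^ 2 := by rw [hv]; rfl
    have : 0 < σ ^ 2 := by positivity
    linarith
  set ν0 : Measure (Fin p → ℝ) := Measure.pi fun _ => gaussianReal 0 v with hν0
  have hSm : Measurable fun x : Fin p → ℝ => csvI σ (N-p) K K x / csvI σ (N-p) K L x :=
    (csvI_meas σ _ K K).div (csvI_meas σ _ K L)
  have hCm : MeasurableSet (csvC p) := (csvC_open _).measurableSet
  set M := ∫ x in csvC p, MvPolynomial.eval x (csvW p (N - p)) ∂ν0 with hM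
  have hnn : 0 ≤ᵐ[ν0.restrict (csvC p)] fun x => MvPolynomial.eval x (csvW p (N - p)) :=
    (ae_restrict_iff' hCm).2 (Filter.Eventually.of_forall fun x hx => (csv_W_pos _ x hx).le)
  have hMl : ∫⁻ x in csvC p, ENNReal.ofReal (MvPolynomial.eval x (csvW p (N - p))) ∂ν0 = ENNReal.ofReal M :=
    (ofReal_integral_eq_lintegral_ofReal (csv_integrable_mv v _).integrableOn hnn).symm
  have hne : (csvC p).Nonempty := by
    refine ⟨fun i => (p : ℝ) - (i : ℕ), fun i j hij => ?_, fun i => ?_⟩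
    · have : ((i : ℕ) : ℝ) < ((j : ℕ) : ℝ) := by exact_mod_cast hij
      simp only; linarith
    · have : ((i : ℕ) : ℝ) < (p : ℝ) := by exact_mod_cast i.2
      simp only; linarith
  have hg : (gaussianReal 0 v).IsOpenPosMeasure :=
    (gaussianReal_absolutelyContinuous' 0 hv0).isOpenPosMeasure
  have hop : ν0.IsOpenPosMeasure := Measure.pi.isOpenPosMeasure _
  have hM0 : 0 < M := by
    rw [hM, setIntegral_pos_iff_support_of_nonneg_ae hnn (csv_integrable_mv v _).integrableOn]
    refine lt_of_lt_of_le ((csvC_open p).measure_pos ν0 hne)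
      (measure_mono fun x hx => ⟨(csv_W_pos _ x hx).ne', hx⟩)
  have hMne : ENNReal.ofReal M ≠ 0 := by simpa using hM0
  have l1 := csv_law N p hNp.le v hv0 P Z hZ d hd hanti h0 hlaw htr (csvC p) hCm subset_rfl
  rw [← hν0, ← hM, hMl] at l1
  have hP1 : P {ω | d ω ∈ csvC p} = 1 := by
    have h1 : ENNReal.ofReal M * P {ω | d ω ∈ csvC p} = ENNReal.ofReal M * 1 := by rw [l1, mul_one]
    exact (ENNReal.mul_right_inj hMne ENNReal.ofReal_ne_top).1 h1
  have hae : ∀ᵐ ω ∂P, d ω ∈ csvC p := (prob_compl_eq_zero_iff (hd hCm)).2 hP1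
  refine Measure.ext fun A hA => ?_
  have hSd : Measurable fun ω => csvI σ (N - p) K K (d ω) / csvI σ (N - p) K L (d ω) := hSm.comp hd
  rw [Measure.map_apply hSd hA, Measure.restrict_apply hA]
  have l2 := csv_law N p hNp.le v hv0 P Z hZ d hd hanti h0 hlaw htr
    (csvC p ∩ (fun x => csvI σ (N-p) K K x / csvI σ (N-p) K L x) ⁻¹' A) (hCm.inter (hSm hA))
    Set.inter_subset_left
  rw [csv_fubini σ hσ (N-p) K L hKL A hA v hv, ← hν0, ← hM, hMl, mul_comm (volume _)] at l2
  rw [← (ENNReal.mul_right_inj hMne ENNReal.ofReal_ne_top).1 l2]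
  refine measure_congr ?_
  filter_upwards [hae] with ω hω
  apply propext
  exact ⟨fun h => ⟨hω, h⟩, fun h => h.2⟩

/-- **Conditional Singular Value test (Theorem 2.1).**
Model: `Y = B + E ∈ ℝ^{N×p}` (here `N > p ≥ 1`) with i.i.d. `N(0, σ²)` noise entries, i.e.
the law of `Y` is the product Gaussian measure with mean matrix `B`.  `Y = U D Vᵀ` is a
measurably chosen singular value decomposition with singular values
`d 0 ≥ d 1 ≥ ⋯ ≥ d (p-1) ≥ 0`.  Fix a (zero-based) index `k` with `k + 1 < p`
(the `k+1`-st singular value, one-based `k+1 ∈ {1,…,p-1}`).  Under the null hypothesis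
`U^{-(k)} (U^{-(k)})ᵀ B V^{-(k)} (V^{-(k)})ᵀ = 0` (almost surely), where `U^{-(k)}` keeps the
columns of index `≥ k` (i.e. discards the first `k` columns, encoded below by the diagonal
mask `if k ≤ j then 1 else 0`), the statistic
`S = (∫_{d_k}^{d_{k-1}} e^{-z²/(2σ²)} z^{N-p} ∏_{j≠k} |z² - d_j²| dz) /
     (∫_{d_{k+1}}^{d_{k-1}} e^{-z²/(2σ²)} z^{N-p} ∏_{j≠k} |z² - d_j²| dz)`
is uniform on `(0,1)`.  The upper integration limit `d_{k-1}` (with convention `d_{-1} = ∞`)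
is encoded by the condition `∀ j < k, z < d j`. -/
theorem csv_statistic_uniform
    (N p : ℕ) (hNp : p < N) (hp : 1 ≤ p)
    (σ : ℝ) (hσ : 0 < σ)
    (B : Matrix (Fin N) (Fin p) ℝ)
    (k : ℕ) (hk : k + 1 < p)
    {Ω : Type} [MeasurableSpace Ω] (P : Measure Ω) [IsProbabilityMeasure P]
    (Y U : Ω → Fin N → Fin p → ℝ) (V : Ω → Fin p → Fin p → ℝ) (d : Ω → Fin p → ℝ)
    (hYm : Measurable Y) (hUm : Measurable U) (hVm : Measurable V) (hdm : Measurable d)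
    (hlaw : Measure.map Y P =
      Measure.pi (fun i : Fin N => Measure.pi (fun j : Fin p =>
        gaussianReal (B i j) ⟨σ ^ 2, sq_nonneg σ⟩)))
    (hSVD : ∀ ω, Matrix.of (Y ω) =
      Matrix.of (U ω) * Matrix.diagonal (d ω) * (Matrix.of (V ω))ᵀ)
    (hUorth : ∀ ω, (Matrix.of (U ω))ᵀ * Matrix.of (U ω) = 1)
    (hVorth : ∀ ω, (Matrix.of (V ω))ᵀ * Matrix.of (V ω) = 1)
    (hanti : ∀ ω, Antitone (d ω))
    (hnonneg : ∀ ω i, 0 ≤ d ω i)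
    (hnull : ∀ᵐ ω ∂P,
      (Matrix.of (U ω) * Matrix.diagonal (fun j : Fin p => if k ≤ (j : ℕ) then (1:ℝ) else 0) *
          (Matrix.of (U ω))ᵀ) * B *
        (Matrix.of (V ω) * Matrix.diagonal (fun j : Fin p => if k ≤ (j : ℕ) then (1:ℝ) else 0) *
          (Matrix.of (V ω))ᵀ) = 0) :
    Measure.map (fun ω =>
      (∫ z in {z : ℝ | d ω ⟨k, by omega⟩ < z ∧ ∀ j : Fin p, (j : ℕ) < k → z < d ω j},
        Real.exp (-(z ^ 2) / (2 * σ ^ 2)) * z ^ (N - p) *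
          ∏ j ∈ Finset.univ.erase (⟨k, by omega⟩ : Fin p), |z ^ 2 - d ω j ^ 2|) /
      (∫ z in {z : ℝ | d ω ⟨k + 1, by omega⟩ < z ∧ ∀ j : Fin p, (j : ℕ) < k → z < d ω j},
        Real.exp (-(z ^ 2) / (2 * σ ^ 2)) * z ^ (N - p) *
          ∏ j ∈ Finset.univ.erase (⟨k, by omega⟩ : Fin p), |z ^ 2 - d ω j ^ 2|)) P
      = volume.restrict (Set.Ioo (0 : ℝ) 1) := by
  set v : NNReal := ⟨σ ^ 2, sq_nonneg σ⟩ with hv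
  have hv0 : v ≠ 0 := by
    intro h
    have h1 : (v : ℝ) = 0 := by rw [h]; rfl
    have h2 : (v : ℝ) = σ ^ 2 := rfl
    have h3 : 0 < σ ^ 2 := by positivity
    linarith
  have hB : B = 0 := csv_B_zero N p hNp v hv0 B k hk P Y U V d hYm hlaw hSVD hUorth hVorth
    hanti hnonneg hnull
  subst hB
  have hZ := csv_Z_law N p v P Y hYm hlaw
  exact csv_final N p hNp σ hσ ⟨k, by omega⟩ ⟨k + 1, by omega⟩ rfl P v hv
    (fun ω (x : Fin N × Fin p) => Y ω x.1 x.2) (by fun_prop) d hdm hanti hnonneg hZ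
    (fun ω j => csv_trace N p (Y ω) (U ω) (V ω) (d ω) (hSVD ω) (hUorth ω) (hVorth ω) j)
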